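/- arXiv:2205.06625 — 2 statements merged into one kernel-verified Lean document; each statement's English description precedes it below -/
import Mathlib

section
/- Let D ⊆ ℕ be a finite set with 0 ∈ D and containing some d ≥ 2, and let ω : ℕ → ℝ satisfy ω(k) > 0 for k ∈ D and ω(k) = 0 for k ∉ D. For a rooted labeled tree T on n vertices, let Ω(T) = ∏_{v} ω(outdeg(v)), the product over all vertices of the weight of their out-degree. Let S be the set of n ≥ 1 for which some rooted labeled tree T on n vertices has Ω(T) > 0, and for n ∈ S define g_n = (∑ Ω(T₁)·Ω(T₂), summed over ordered pairs (T₁, T₂) of isomorphic rooted labeled trees on n vertices) / (∑_T Ω(T))². Then there exist constants B > 0 and c ∈ (0,1) such that g_n ≤ B · c^n for all n ∈ S. -/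
open scoped Classical BigOperators

/-- A rooted labeled tree on `n` vertices: a simple graph on `Fin n` that is a
tree, together with a distinguished root vertex. -/
structure RTree (n : ℕ) where
  graph : SimpleGraph (Fin n)
  isTree : graph.IsTree
  root : Fin n

namespace RTree

/-- Two rooted labeled trees are isomorphic if there is a graph isomorphism
mapping root to root. -/
def Isom {n : ℕ} (T₁ T₂ : RTree n) : Prop :=
  ∃ φ : T₁.graph ≃g T₂.graph, φ T₁.root = T₂.root

/-- The out-degree (number of children) of a vertex: its degree if it is the
root and its degree minus one otherwise. -/
noncomputable def outdeg {n : ℕ} (T : RTree n) (v : Fin n) : ℕ :=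
  if v = T.root then (T.graph.neighborSet v).ncard
  else (T.graph.neighborSet v).ncard - 1

/-- The number of root-fixing graph automorphisms. -/
noncomputable def autCard {n : ℕ} (T : RTree n) : ℕ :=
  Nat.card {φ : T.graph ≃g T.graph // φ T.root = T.root}

instance finite {n : ℕ} : Finite (RTree n) := by
  have h : Function.Injective (fun T : RTree n => (T.graph, T.root)) := by
    rintro ⟨g₁, h₁, r₁⟩ ⟨g₂, h₂, r₂⟩ h
    simp_all
  exact Finite.of_injective _ h

noncomputable instance fintype {n : ℕ} : Fintype (RTree n) := Fintype.ofFinite _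

end RTree

/-!
Every sum over labeled trees is a sum over plane trees: ordering the children of each vertex in all
`∏ outdeg(v)!` ways shows that, with `w k = ω k / k!`, the total weight of the labeled trees on `n`
vertices is `n!` times the `w`-mass of the plane trees of size `n`, and the weight of the
isomorphism class of `X` is `n!` times the `w`-mass of the plane trees of shape `X`. So `g_n` is at
most the largest ratio of the mass of a shape on `n` vertices to the mass of the size `n`.
Replacing `w k` by `a * b ^ k * w k` does not change this ratio, and a suitable choice of `a` and
`b` makes `w` a critical offspring distribution `p`.

The mass of a shape decays exponentially. A tree of shape `X` splits into a given root branch of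
`X` and the rest. The rests have total mass at most the mean `1` of `p`, spread over more than one
shape, so the shape `X` has at most `r < 1` times the mass of the shape of the branch. It also has
at most a constant times the product of the masses of all branches. In the induction on the size,
the first bound handles a root with one large branch, and the second a root with several, where the
smallness of the masses of large shapes absorbs the constant.

The mass of a size decays slower than any exponential along the possible sizes. Grafting at the
leftmost leaf makes it supermultiplicative. Its generating function diverges at every `z > 1`: a
finite value `x` would solve `x = z * Φ x`, where `Φ` is the generating function of `p`, but
`x ≤ Φ x` by convexity and criticality.
-/

open scoped NNReal ENNReal Nat

/-! ### Rooted trees as joins of their branches -/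

/-- A finite rooted tree on an arbitrary vertex type. -/
structure FinRootedTree where
  V : Type
  [fintype : Fintype V]
  graph : SimpleGraph V
  isTree : graph.IsTree
  root : V

namespace FinRootedTree

attribute [instance] FinRootedTree.fintype

/-- Isomorphisms of rooted trees: graph isomorphisms that send root to root. -/
structure Iso (X Y : FinRootedTree) where
  toIso : X.graph ≃g Y.graph
  map_root : toIso X.root = Y.root

/-- The number of children of a vertex, with the convention of `RTree.outdeg`. -/
noncomputable def outdeg (X : FinRootedTree) (v : X.V) : ℕ :=
  if v = X.root then (X.graph.neighborSet v).ncard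
  else (X.graph.neighborSet v).ncard - 1

namespace Iso

variable {X Y Z : FinRootedTree}

/-- The identity isomorphism. -/
def refl (X : FinRootedTree) : X.Iso X := ⟨SimpleGraph.Iso.refl, rfl⟩

/-- The inverse isomorphism. -/
def symm (f : X.Iso Y) : Y.Iso X := ⟨f.1.symm, f.1.symm_apply_eq.2 f.2.symm⟩

/-- The composition of two isomorphisms. -/
def trans (f : X.Iso Y) (g : Y.Iso Z) : X.Iso Z :=
  ⟨f.1.trans g.1, (congrArg g.1 f.2).trans g.2⟩

theorem ext : ∀ {f g : X.Iso Y}, (∀ v, f.1 v = g.1 v) → f = g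
  | ⟨_, _⟩, ⟨_, _⟩, h => by
    congr
    exact RelIso.ext h

instance : Finite (X.Iso Y) :=
  Finite.of_injective (fun f : X.Iso Y => ⇑f.1) fun _ _ h => ext (congrFun h)

/-- Composition with a fixed isomorphism, as a bijection on isomorphisms out of `X`. -/
def transEquiv (g : Y.Iso Z) : X.Iso Y ≃ X.Iso Z where
  toFun f := f.trans g
  invFun f := f.trans g.symm
  left_inv f := ext fun v => g.1.symm_apply_apply (f.1 v)
  right_inv f := ext fun v => g.1.apply_symm_apply (f.1 v)

theorem outdeg_apply (f : X.Iso Y) (v : X.V) : Y.outdeg (f.1 v) = X.outdeg v := by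
  have eq_root_iff : f.1 v = Y.root ↔ v = X.root := f.1.injective.eq_iff' f.2
  have neighborSet_eq : Y.graph.neighborSet (f.1 v) = f.1 '' X.graph.neighborSet v := by
    ext w
    obtain ⟨w, rfl⟩ := f.1.surjective w
    simp [f.1.map_adj_iff]
  simp only [outdeg, eq_root_iff, neighborSet_eq, Set.ncard_image_of_injective _ f.1.injective]

theorem prod_outdeg {M : Type*} [CommMonoid M] (f : X.Iso Y) (w : ℕ → M) :
    ∏ v, w (X.outdeg v) = ∏ v, w (Y.outdeg v) :=
  Fintype.prod_equiv f.1.toEquiv _ _ fun v => congrArg w (f.outdeg_apply v).symm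

/-- A root-preserving bijection between rooted trees that preserves adjacency; it reflects
adjacency as well because a tree is a minimal connected graph. -/
def ofAdj (e : X.V ≃ Y.V) (adj : ∀ {a b}, X.graph.Adj a b → Y.graph.Adj (e a) (e b))
    (root : e X.root = Y.root) : X.Iso Y := by
  refine ⟨⟨e, fun {a b} => ⟨fun h => ?_, adj⟩⟩, root⟩
  have connected : (X.graph.map e.toEmbedding).Connected :=
    (SimpleGraph.Iso.map e X.graph).connected_iff.1 X.isTree.connected
  have map_le : X.graph.map e.toEmbedding ≤ Y.graph := by
    rw [SimpleGraph.map_le_iff_le_comap]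
    exact fun a b => adj
  have le_map := (SimpleGraph.isTree_iff_minimal_connected.1 Y.isTree).2 connected map_le
  exact SimpleGraph.map_adj_apply.1 (le_map h)

end Iso

section Join

variable {ι κ : Type} {X : ι → FinRootedTree} {Y : κ → FinRootedTree}

/-- Adjacency in the tree obtained by joining the roots of the trees `X i` to a new root `none`. -/
inductive JoinAdj (X : ι → FinRootedTree) :
    Option (Σ i, (X i).V) → Option (Σ i, (X i).V) → Prop
  | up (i) : JoinAdj X none (some ⟨i, (X i).root⟩)
  | down (i) : JoinAdj X (some ⟨i, (X i).root⟩) none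
  | inner (i) (a b) : (X i).graph.Adj a b → JoinAdj X (some ⟨i, a⟩) (some ⟨i, b⟩)

/-- The underlying graph of `FinRootedTree.join`. -/
def joinGraph (X : ι → FinRootedTree) : SimpleGraph (Option (Σ i, (X i).V)) where
  Adj := JoinAdj X
  symm := ⟨by
    rintro _ _ (i | i | ⟨i, a, b, h⟩)
    exacts [.down i, .up i, .inner i b a h.symm]⟩
  loopless := ⟨by
    rintro x (_ | _ | ⟨_, _, _, h⟩)
    exact h.ne rfl⟩

theorem some_mk_injective (X : ι → FinRootedTree) (i : ι) :
    Function.Injective fun a : (X i).V => some (⟨i, a⟩ : Σ i, (X i).V) :=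
  (Option.some_injective _).comp sigma_mk_injective

theorem some_root_injective (X : ι → FinRootedTree) :
    Function.Injective fun i => some (⟨i, (X i).root⟩ : Σ i, (X i).V) :=
  fun _ _ h => congrArg Sigma.fst (Option.some_injective _ h)

theorem joinGraph_adj_none {x} : (joinGraph X).Adj none x ↔ ∃ i, some ⟨i, (X i).root⟩ = x := by
  constructor
  · rintro (i | _ | _)
    exact ⟨i, rfl⟩
  · rintro ⟨i, rfl⟩
    exact .up i

theorem joinGraph_adj_some {i a x} : (joinGraph X).Adj (some ⟨i, a⟩) x ↔
    (a = (X i).root ∧ none = x) ∨ ∃ b, (X i).graph.Adj a b ∧ some ⟨i, b⟩ = x := by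
  constructor
  · rintro (_ | _ | ⟨_, _, b, h⟩)
    exacts [.inl ⟨rfl, rfl⟩, .inr ⟨b, h, rfl⟩]
  · rintro (⟨rfl, rfl⟩ | ⟨b, h, rfl⟩)
    exacts [.down i, .inner i a b h]

theorem connected_joinGraph : (joinGraph X).Connected := by
  have reachable_from_root (x) : (joinGraph X).Reachable none x := by
    obtain _ | ⟨i, a⟩ := x
    · exact .refl _
    · let inclusion : (X i).graph →g joinGraph X := ⟨fun a => some ⟨i, a⟩, .inner i _ _⟩
      have root_adj : (joinGraph X).Adj none (some ⟨i, (X i).root⟩) := .up i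
      exact root_adj.reachable.trans
        (((X i).isTree.connected.preconnected (X i).root a).map inclusion)
  exact ⟨fun x y => (reachable_from_root x).symm.trans (reachable_from_root y)⟩

theorem card_edgeSet_joinGraph_le [Fintype ι] :
    Nat.card (joinGraph X).edgeSet ≤ ∑ i, Fintype.card (X i).V := by
  let edge (p : Σ i, Option (X i).graph.edgeSet) : Sym2 (Option (Σ i, (X i).V)) :=
    p.2.elim s(none, some ⟨p.1, (X p.1).root⟩) fun e => e.1.map fun a => some ⟨p.1, a⟩
  have edgeSet_subset : (joinGraph X).edgeSet ⊆ Set.range edge := by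
    rintro ⟨x, y⟩ (i | i | ⟨i, a, b, h⟩)
    · exact ⟨⟨i, none⟩, rfl⟩
    · exact ⟨⟨i, none⟩, Sym2.eq_swap⟩
    · exact ⟨⟨i, some ⟨s(a, b), h⟩⟩, rfl⟩
  calc Nat.card (joinGraph X).edgeSet
      ≤ Nat.card (Set.range edge) := Nat.card_mono (Set.finite_range edge) edgeSet_subset
    _ ≤ Nat.card (Σ i, Option (X i).graph.edgeSet) := Finite.card_range_le edge
    _ = ∑ i, Fintype.card (X i).V := by
      rw [Nat.card_sigma]
      refine Finset.sum_congr rfl fun i _ => ?_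
      rw [Finite.card_option, (SimpleGraph.isTree_iff_connected_and_card.1 (X i).isTree).2,
        Nat.card_eq_fintype_card]

theorem isTree_joinGraph [Finite ι] : (joinGraph X).IsTree := by
  cases nonempty_fintype ι
  refine SimpleGraph.isTree_iff_connected_and_card.2 ⟨connected_joinGraph, le_antisymm ?_
    connected_joinGraph.card_vert_le_card_edgeSet_add_one⟩
  simpa using card_edgeSet_joinGraph_le (X := X)

variable [Fintype ι] [Fintype κ]

/-- The rooted tree whose root has the trees `X i` hanging from it. -/
abbrev join (X : ι → FinRootedTree) : FinRootedTree where
  V := Option (Σ i, (X i).V)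
  graph := joinGraph X
  isTree := isTree_joinGraph
  root := none

theorem card_join : Fintype.card (join X).V = 1 + ∑ i, Fintype.card (X i).V := by
  simp [add_comm]

theorem outdeg_join_none : (join X).outdeg none = Fintype.card ι := by
  have neighborSet_eq : (joinGraph X).neighborSet none =
      Set.range fun i => some ⟨i, (X i).root⟩ := Set.ext fun _ => joinGraph_adj_none
  rw [outdeg, if_pos rfl, neighborSet_eq, ← Set.image_univ,
    Set.ncard_image_of_injective _ (some_root_injective X), Set.ncard_univ,
    Nat.card_eq_fintype_card]

theorem outdeg_join_some (i : ι) (a : (X i).V) :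
    (join X).outdeg (some ⟨i, a⟩) = (X i).outdeg a := by
  rw [outdeg, if_neg (Option.some_ne_none _), outdeg]
  split_ifs with ha
  · have neighborSet_eq : (joinGraph X).neighborSet (some ⟨i, a⟩) =
        insert none ((fun b => some ⟨i, b⟩) '' (X i).graph.neighborSet a) := by
      ext x
      simpa [ha, eq_comm] using joinGraph_adj_some (i := i) (a := a) (x := x)
    rw [neighborSet_eq, Set.ncard_insert_of_notMem (by simp),
      Set.ncard_image_of_injective _ (some_mk_injective X i), Nat.add_sub_cancel]
  · have neighborSet_eq : (joinGraph X).neighborSet (some ⟨i, a⟩) =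
        (fun b => some ⟨i, b⟩) '' (X i).graph.neighborSet a := by
      ext x
      simpa [ha] using joinGraph_adj_some (i := i) (a := a) (x := x)
    rw [neighborSet_eq, Set.ncard_image_of_injective _ (some_mk_injective X i)]

theorem prod_outdeg_join {M : Type*} [CommMonoid M] (w : ℕ → M) :
    ∏ v, w ((join X).outdeg v) = w (Fintype.card ι) * ∏ i, ∏ v, w ((X i).outdeg v) := by
  rw [Fintype.prod_option, Fintype.prod_sigma, outdeg_join_none]
  simp only [outdeg_join_some]

/-- Isomorphisms of the subtrees, along a bijection of the index sets, assemble to an isomorphism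
of the joins. -/
def joinIso (p : Σ σ : ι ≃ κ, ∀ i, (X i).Iso (Y (σ i))) : (join X).Iso (join Y) :=
  .ofAdj (Equiv.optionCongr (Equiv.sigmaCongr p.1 fun i => (p.2 i).1.toEquiv))
    (by
      rintro _ _ (i | i | ⟨i, a, b, h⟩)
      · exact joinGraph_adj_none.2 ⟨p.1 i, by simp [Equiv.sigmaCongr, (p.2 i).2]⟩
      · exact (joinGraph_adj_none.2 ⟨p.1 i, by simp [Equiv.sigmaCongr, (p.2 i).2]⟩).symm
      · exact .inner (p.1 i) _ _ ((p.2 i).1.map_adj_iff.2 h))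
    rfl

theorem joinIso_some (p : Σ σ : ι ≃ κ, ∀ i, (X i).Iso (Y (σ i))) (i : ι) (a : (X i).V) :
    (joinIso p).1 (some ⟨i, a⟩) = some ⟨p.1 i, (p.2 i).1 a⟩ := rfl

theorem joinIso_injective :
    Function.Injective (joinIso : (Σ σ : ι ≃ κ, ∀ i, (X i).Iso (Y (σ i))) → _) := by
  rintro ⟨σ, f⟩ ⟨τ, g⟩ h
  have apply_eq (i a) : some (⟨σ i, (f i).1 a⟩ : Σ j, (Y j).V) = some ⟨τ i, (g i).1 a⟩ := by
    rw [← joinIso_some ⟨σ, f⟩, h, joinIso_some]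
  obtain rfl : σ = τ := Equiv.ext fun i => some_root_injective Y <| by
    simpa only [(f i).2, (g i).2] using apply_eq i (X i).root
  congr
  exact funext fun i => Iso.ext fun a => some_mk_injective Y _ (apply_eq i a)

section

variable (Φ : (join X).Iso (join Y)) {i : ι} {j : κ}

theorem Iso.exists_apply_join_root (i : ι) :
    ∃ j, Φ.1 (some ⟨i, (X i).root⟩) = some ⟨j, (Y j).root⟩ := by
  have adj : (joinGraph Y).Adj (Φ.1 none) (Φ.1 (some ⟨i, (X i).root⟩)) :=
    Φ.1.map_adj_iff.2 (.up i)
  rw [Φ.2, joinGraph_adj_none] at adj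
  exact adj.imp fun _ => Eq.symm

variable {Φ}

theorem Iso.exists_apply_join_some
    (h : Φ.1 (some ⟨i, (X i).root⟩) = some ⟨j, (Y j).root⟩) (a : (X i).V) :
    ∃ b, Φ.1 (some ⟨i, a⟩) = some ⟨j, b⟩ := by
  have reach := (SimpleGraph.reachable_iff_reflTransGen _ _).1
    ((X i).isTree.connected.preconnected (X i).root a)
  induction reach with
  | refl => exact ⟨_, h⟩
  | @tail a a' _ adj ih =>
    obtain ⟨b, hb⟩ := ih
    have adj' : (joinGraph Y).Adj (Φ.1 (some ⟨i, a⟩)) (Φ.1 (some ⟨i, a'⟩)) :=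
      Φ.1.map_adj_iff.2 (.inner i a a' adj)
    rw [hb, joinGraph_adj_some] at adj'
    obtain ⟨-, h_none⟩ | ⟨b', -, hb'⟩ := adj'
    · exact absurd (Φ.1.injective (Φ.2.trans h_none)) (Option.some_ne_none _).symm
    · exact ⟨b', hb'.symm⟩

theorem Iso.exists_restrict_join (h : Φ.1 (some ⟨i, (X i).root⟩) = some ⟨j, (Y j).root⟩) :
    ∃ f : (X i).Iso (Y j), ∀ a, Φ.1 (some ⟨i, a⟩) = some ⟨j, f.1 a⟩ := by
  have h_symm : Φ.symm.1 (some ⟨j, (Y j).root⟩) = some ⟨i, (X i).root⟩ :=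
    Φ.1.symm_apply_eq.2 h.symm
  choose f hf using Iso.exists_apply_join_some h
  choose g hg using Iso.exists_apply_join_some h_symm
  let e : (X i).V ≃ (Y j).V :=
    { toFun := f
      invFun := g
      left_inv a := some_mk_injective X i <| by
        simp only [← hg, ← hf]
        exact Φ.1.symm_apply_apply _
      right_inv b := some_mk_injective Y j <| by
        simp only [← hf, ← hg]
        exact Φ.1.apply_symm_apply _ }
  refine ⟨.ofAdj e (fun {a b} adj => ?_) (some_mk_injective Y j ((hf _).symm.trans h)), hf⟩
  have adj' : (joinGraph Y).Adj (Φ.1 (some ⟨i, a⟩)) (Φ.1 (some ⟨i, b⟩)) :=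
    Φ.1.map_adj_iff.2 (.inner i a b adj)
  rw [hf, hf, joinGraph_adj_some] at adj'
  obtain ⟨-, h_none⟩ | ⟨c, hc, h_some⟩ := adj'
  · cases h_none
  · rwa [some_mk_injective Y j h_some] at hc

end

theorem joinIso_surjective :
    Function.Surjective (joinIso : (Σ σ : ι ≃ κ, ∀ i, (X i).Iso (Y (σ i))) → _) := by
  intro Φ
  choose σ hσ using Φ.exists_apply_join_root
  choose τ hτ using Φ.symm.exists_apply_join_root
  let e : ι ≃ κ :=
    { toFun := σ
      invFun := τ
      left_inv i := some_root_injective X <| by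
        simp only [← hτ, ← hσ]
        exact Φ.1.symm_apply_apply _
      right_inv j := some_root_injective Y <| by
        simp only [← hσ, ← hτ]
        exact Φ.1.apply_symm_apply _ }
  choose f hf using fun i => Iso.exists_restrict_join (hσ i)
  refine ⟨⟨e, f⟩, Iso.ext ?_⟩
  rintro (_ | ⟨i, a⟩)
  · exact Φ.2.symm
  · exact (hf i a).symm

end Join

section Branch

variable (X : FinRootedTree)

/-- The forest left when the root is removed; the root stays as an isolated vertex. -/
abbrev forest : SimpleGraph X.V := X.graph.deleteIncidenceSet X.root

variable {X}

theorem forest_adj {v w : X.V} :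
    X.forest.Adj v w ↔ X.graph.Adj v w ∧ v ≠ X.root ∧ w ≠ X.root :=
  SimpleGraph.deleteIncidenceSet_adj

theorem isAcyclic_forest : X.forest.IsAcyclic :=
  X.isTree.isAcyclic.anti (SimpleGraph.deleteIncidenceSet_le _ _)

theorem ne_root_of_reachable_forest {u v : X.V} (hu : u ≠ X.root)
    (h : X.forest.Reachable u v) : v ≠ X.root := by
  rw [SimpleGraph.reachable_iff_reflTransGen] at h
  obtain rfl | ⟨_, _, adj⟩ := h.cases_tail
  · exact hu
  · exact (forest_adj.1 adj).2.2

theorem exists_adj_root_reachable_forest {v : X.V} (hv : v ≠ X.root) :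
    ∃ u, X.graph.Adj X.root u ∧ X.forest.Reachable u v := by
  have reach := (SimpleGraph.reachable_iff_reflTransGen _ _).1
    (X.isTree.connected.preconnected X.root v)
  induction reach with
  | refl => exact absurd rfl hv
  | @tail w v _ adj ih =>
    by_cases hw : w = X.root
    · exact ⟨v, hw ▸ adj, .refl v⟩
    · obtain ⟨u, hu, huw⟩ := ih hw
      exact ⟨u, hu, huw.trans (forest_adj.2 ⟨adj, hw, hv⟩).reachable⟩

theorem eq_of_reachable_forest {u v : X.V} (hu : X.graph.Adj X.root u)
    (hv : X.graph.Adj X.root v) (h : X.forest.Reachable u v) : u = v := by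
  by_contra huv
  have bridge := SimpleGraph.isAcyclic_iff_forall_adj_isBridge.1 X.isTree.isAcyclic hu
  refine (SimpleGraph.isBridge_iff.1 bridge) ?_
  have forest_le : X.forest ≤ X.graph.deleteEdges {s(X.root, u)} := by
    intro a b hab
    obtain ⟨adj, ha, hb⟩ := forest_adj.1 hab
    rw [SimpleGraph.deleteEdges_adj]
    exact ⟨adj, by simp [ha, hb]⟩
  have root_adj : (X.graph.deleteEdges {s(X.root, u)}).Adj X.root v := by
    rw [SimpleGraph.deleteEdges_adj]
    exact ⟨hv, by simp [Ne.symm huv, hu.ne]⟩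
  exact root_adj.reachable.trans (h.mono forest_le).symm

/-- The subtree of all descendants of the child `u` of the root. -/
noncomputable abbrev branch (u : X.graph.neighborSet X.root) : FinRootedTree where
  V := X.forest.connectedComponentMk u
  graph := (X.forest.connectedComponentMk u).toSimpleGraph
  isTree := isAcyclic_forest.isTree_connectedComponent _
  root := ⟨u, SimpleGraph.ConnectedComponent.connectedComponentMk_mem⟩

theorem reachable_of_branch {u : X.graph.neighborSet X.root} (v : (branch u).V) :
    X.forest.Reachable u v.1 :=
  (SimpleGraph.ConnectedComponent.exact v.2).symm

theorem branch_ne_root {u : X.graph.neighborSet X.root} (v : (branch u).V) :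
    v.1 ≠ X.root :=
  ne_root_of_reachable_forest u.2.ne' (reachable_of_branch v)

theorem card_branch_lt (u : X.graph.neighborSet X.root) :
    Fintype.card (branch u).V < Fintype.card X.V :=
  Fintype.card_lt_of_injective_of_notMem Subtype.val Subtype.val_injective (b := X.root)
    fun ⟨v, hv⟩ => branch_ne_root v hv

theorem bijective_join_branch :
    Function.Bijective fun x : (join (branch (X := X))).V => x.elim X.root fun p => p.2.1 := by
  constructor
  · rintro (_ | ⟨u, a⟩) (_ | ⟨v, b⟩) h
    · rfl
    · exact absurd h.symm (branch_ne_root b)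
    · exact absurd h (branch_ne_root a)
    · obtain ⟨a, ha⟩ := a
      obtain ⟨b, hb⟩ := b
      obtain rfl : a = b := h
      obtain rfl : u = v := Subtype.ext <| eq_of_reachable_forest u.2 v.2 <|
        (SimpleGraph.ConnectedComponent.exact ha).symm.trans
          (SimpleGraph.ConnectedComponent.exact hb)
      rfl
  · intro v
    by_cases hv : v = X.root
    · exact ⟨none, hv.symm⟩
    · obtain ⟨u, hu, huv⟩ := exists_adj_root_reachable_forest hv
      exact ⟨some ⟨⟨u, hu⟩, v, SimpleGraph.ConnectedComponent.sound huv.symm⟩, rfl⟩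

variable (X) in
/-- Every rooted tree is the join of the branches at its root. -/
noncomputable def joinBranchIso : (join (branch (X := X))).Iso X :=
  .ofAdj (.ofBijective _ bijective_join_branch)
    (by
      rintro _ _ (u | u | ⟨u, a, b, h⟩)
      · exact u.2
      · exact u.2.symm
      · exact (forest_adj.1 h).1)
    rfl

end Branch

theorem induction {P : FinRootedTree → Prop}
    (of_iso : ∀ {X Y : FinRootedTree}, X.Iso Y → P X → P Y)
    (of_join : ∀ {k : ℕ} {X : Fin k → FinRootedTree}, (∀ i, P (X i)) → P (join X))
    (X : FinRootedTree) : P X := by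
  obtain ⟨n, hn⟩ : ∃ n, Fintype.card X.V = n := ⟨_, rfl⟩
  induction n using Nat.strong_induction_on generalizing X with
  | _ n ih =>
    let e := Fintype.equivFin (X.graph.neighborSet X.root)
    have join_iso : (join fun i => branch (e.symm i)).Iso X :=
      (joinIso ⟨e.symm, fun i => .refl (branch (e.symm i))⟩).trans X.joinBranchIso
    exact of_iso join_iso (of_join fun i => ih _ (hn ▸ card_branch_lt (e.symm i)) _ rfl)

end FinRootedTree

/-! ### Plane trees and labeled trees -/

/-- Plane trees, that is, rooted trees with linearly ordered children. -/
inductive PlaneTree where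
  | node (k : ℕ) (c : Fin k → PlaneTree) : PlaneTree

namespace PlaneTree

/-- The rooted tree obtained by forgetting the order of the children. -/
noncomputable def toRooted : PlaneTree → FinRootedTree
  | node _ c => .join fun i => (c i).toRooted

/-- The number of vertices. -/
def size : PlaneTree → ℕ
  | node _ c => 1 + ∑ i, (c i).size

/-- The product of the weights `w k` over all vertices, `k` being the number of children. -/
def weight {M : Type*} [CommMonoid M] (w : ℕ → M) : PlaneTree → M
  | node k c => w k * ∏ i, (c i).weight w

section

variable {M : Type*} [CommMonoid M] (w : ℕ → M) {k : ℕ} (c : Fin k → PlaneTree)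

theorem toRooted_node : (node k c).toRooted = .join fun i => (c i).toRooted := rfl

theorem size_node : (node k c).size = 1 + ∑ i, (c i).size := rfl

theorem weight_node : (node k c).weight w = w k * ∏ i, (c i).weight w := rfl

theorem card_toRooted (Q : PlaneTree) : Fintype.card Q.toRooted.V = Q.size := by
  induction Q with
  | node k c ih =>
    rw [toRooted_node, FinRootedTree.card_join, size_node]
    simp only [ih]

theorem prod_outdeg_toRooted (Q : PlaneTree) :
    ∏ v, w (Q.toRooted.outdeg v) = Q.weight w := by
  induction Q with
  | node k c ih =>
    rw [toRooted_node, FinRootedTree.prod_outdeg_join, Fintype.card_fin, weight_node]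
    simp only [ih]

end

/-- Plane trees correspond to finite sequences of plane trees, their root branches. -/
def nodeEquiv : (Σ k, Fin k → PlaneTree) ≃ PlaneTree where
  toFun x := node x.1 x.2
  invFun | node k c => ⟨k, c⟩
  left_inv _ := rfl
  right_inv | node _ _ => rfl

end PlaneTree

namespace FinRootedTree

open PlaneTree

/-- A plane tree together with an identification of its underlying rooted tree with `X`. -/
abbrev PlaneForm (X : FinRootedTree) : Type := Σ Q : PlaneTree, Q.toRooted.Iso X

/-- Transport of plane forms along an isomorphism. -/
noncomputable def PlaneForm.congr {X Y : FinRootedTree} (f : X.Iso Y) :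
    X.PlaneForm ≃ Y.PlaneForm :=
  Equiv.sigmaCongrRight fun _ => f.transEquiv

section

variable {k : ℕ} {X : Fin k → FinRootedTree}

/-- Plane forms of the trees `X i`, taken in any order, assemble to a plane form of their join. -/
noncomputable def PlaneForm.join
    (p : Σ σ : Fin k ≃ Fin k, ∀ i, (X (σ i)).PlaneForm) : (join X).PlaneForm :=
  ⟨node k fun i => (p.2 i).1, joinIso ⟨p.1, fun i => (p.2 i).2⟩⟩

theorem PlaneForm.join_bijective : Function.Bijective (PlaneForm.join (X := X)) := by
  constructor
  · intro p q h
    obtain ⟨σ, c, f, rfl⟩ : ∃ (σ : Fin k ≃ Fin k) (c : Fin k → PlaneTree)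
        (f : ∀ i, (c i).toRooted.Iso (X (σ i))), p = ⟨σ, fun i => ⟨c i, f i⟩⟩ :=
      ⟨_, _, fun i => (p.2 i).2, rfl⟩
    obtain ⟨τ, d, g, rfl⟩ : ∃ (τ : Fin k ≃ Fin k) (d : Fin k → PlaneTree)
        (g : ∀ i, (d i).toRooted.Iso (X (τ i))), q = ⟨τ, fun i => ⟨d i, g i⟩⟩ :=
      ⟨_, _, fun i => (q.2 i).2, rfl⟩
    obtain ⟨h_node, h_iso⟩ := Sigma.mk.inj h
    obtain rfl : c = d := eq_of_heq (node.inj h_node).2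
    obtain ⟨rfl, h⟩ := Sigma.mk.inj (joinIso_injective (eq_of_heq h_iso))
    obtain rfl : f = g := eq_of_heq h
    rfl
  · rintro ⟨⟨l, c⟩, f⟩
    obtain ⟨⟨σ, g⟩, rfl⟩ := joinIso_surjective f
    obtain rfl : l = k := by simpa using Fintype.card_congr σ
    exact ⟨⟨σ, fun i => ⟨c i, g i⟩⟩, rfl⟩

end

theorem prod_factorial_outdeg_ne_zero (X : FinRootedTree) : ∏ v, (X.outdeg v)! ≠ 0 :=
  Finset.prod_ne_zero_iff.2 fun _ _ => Nat.factorial_ne_zero _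

-- A plane form amounts to a choice of an order on the children of every vertex.
theorem card_planeForm (X : FinRootedTree) : Nat.card X.PlaneForm = ∏ v, (X.outdeg v)! := by
  induction X using FinRootedTree.induction with
  | of_iso f ih => rw [← Nat.card_congr (PlaneForm.congr f), ih, f.prod_outdeg]
  | @of_join k X ih =>
    have finite (i) : Finite (X i).PlaneForm :=
      Nat.finite_of_card_ne_zero (ih i ▸ prod_factorial_outdeg_ne_zero _)
    calc Nat.card (join X).PlaneForm
        = ∑ σ : Fin k ≃ Fin k, ∏ i, Nat.card (X (σ i)).PlaneForm := by
          simp only [← Nat.card_congr (Equiv.ofBijective _ PlaneForm.join_bijective),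
            Nat.card_sigma, Nat.card_pi]
      _ = ∑ _σ : Fin k ≃ Fin k, ∏ i, Nat.card (X i).PlaneForm :=
          Finset.sum_congr rfl fun σ _ => σ.prod_comp fun i => Nat.card (X i).PlaneForm
      _ = k ! * ∏ i, ∏ v, ((X i).outdeg v)! := by
          simp only [ih, Finset.sum_const, Finset.card_univ, Fintype.card_perm, Fintype.card_fin,
            smul_eq_mul]
      _ = ∏ v, ((join X).outdeg v)! := by
          rw [prod_outdeg_join Nat.factorial, Fintype.card_fin]

theorem exists_planeTree_iso (X : FinRootedTree) :
    ∃ Q : PlaneTree, Nonempty (Q.toRooted.Iso X) := by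
  have card_ne_zero : Nat.card X.PlaneForm ≠ 0 :=
    X.card_planeForm ▸ X.prod_factorial_outdeg_ne_zero
  obtain ⟨⟨Q, f⟩⟩ := (Nat.card_ne_zero.1 card_ne_zero).1
  exact ⟨Q, ⟨f⟩⟩

/-- Functions on rooted trees that only depend on the isomorphism class. -/
def IsoInvariant {α : Type*} (F : FinRootedTree → α) : Prop :=
  ∀ ⦃X Y : FinRootedTree⦄, X.Iso Y → F X = F Y

theorem IsoInvariant.prod_outdeg {M : Type*} [CommMonoid M] (w : ℕ → M) :
    IsoInvariant fun X => ∏ v, w (X.outdeg v) := fun _ _ f => f.prod_outdeg w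

theorem IsoInvariant.tsum_card_iso_mul {F : FinRootedTree → ℝ≥0∞} (hF : IsoInvariant F)
    (X : FinRootedTree) :
    ∑' Q : PlaneTree, Nat.card (Q.toRooted.Iso X) * F Q.toRooted =
      (∏ v, (X.outdeg v)! : ℕ) * F X := by
  have finite : Finite X.PlaneForm :=
    Nat.finite_of_card_ne_zero (X.card_planeForm ▸ X.prod_factorial_outdeg_ne_zero)
  calc ∑' Q : PlaneTree, Nat.card (Q.toRooted.Iso X) * F Q.toRooted
      = ∑' Q : PlaneTree, ∑' _f : Q.toRooted.Iso X, F Q.toRooted := by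
        simp only [ENNReal.tsum_const, ENat.card_eq_coe_natCard, ENat.toENNReal_coe]
    _ = ∑' _x : X.PlaneForm, F X := by
        rw [← ENNReal.tsum_sigma' fun x : X.PlaneForm => F x.1.toRooted]
        exact tsum_congr fun x => hF x.2
    _ = (∏ v, (X.outdeg v)! : ℕ) * F X := by
        rw [ENNReal.tsum_const, ← X.card_planeForm, ENat.card_eq_coe_natCard]
        simp

end FinRootedTree

namespace RTree

variable {n : ℕ}

/-- A labeled rooted tree as a rooted tree on the vertex type `Fin n`. -/
abbrev toRooted (T : RTree n) : FinRootedTree := ⟨Fin n, T.graph, T.isTree, T.root⟩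

theorem outdeg_toRooted (T : RTree n) (v : Fin n) : T.toRooted.outdeg v = T.outdeg v := by
  simp only [FinRootedTree.outdeg, outdeg]

theorem graph_eq_map {X : FinRootedTree} {T : RTree n} (f : X.Iso T.toRooted) :
    T.graph = X.graph.map f.1.toEquiv.toEmbedding := by
  ext a b
  obtain ⟨a, rfl⟩ := f.1.surjective a
  obtain ⟨b, rfl⟩ := f.1.surjective b
  exact f.1.map_adj_iff.trans (SimpleGraph.map_adj_apply (f := f.1.toEquiv.toEmbedding)).symm

/-- The labeling of the vertices of `X` given by an identification with a labeled tree. -/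
def labeling {X : FinRootedTree} (p : Σ T : RTree n, X.Iso T.toRooted) : X.V ≃ Fin n :=
  p.2.1.toEquiv

theorem labeling_bijective (X : FinRootedTree) (n : ℕ) :
    Function.Bijective (labeling : (Σ T : RTree n, X.Iso T.toRooted) → _) := by
  constructor
  · rintro ⟨T, f⟩ ⟨T', f'⟩ (h : f.1.toEquiv = f'.1.toEquiv)
    have graph_eq : T.graph = T'.graph := by rw [graph_eq_map f, graph_eq_map f', h]
    have root_eq : T.root = T'.root := f.2.symm.trans ((Equiv.congr_fun h X.root).trans f'.2)
    obtain rfl : T = T' := by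
      cases T
      cases T'
      simp_all only
    rw [FinRootedTree.Iso.ext fun v => Equiv.congr_fun h v]
  · intro e
    let iso := SimpleGraph.Iso.map e X.graph
    exact ⟨⟨⟨X.graph.map e.toEmbedding, iso.isTree_iff.1 X.isTree, e X.root⟩, iso, rfl⟩, rfl⟩

theorem sum_card_iso (X : FinRootedTree) (n : ℕ) :
    ∑ T : RTree n, Nat.card (X.Iso T.toRooted) = if Fintype.card X.V = n then n ! else 0 := by
  rw [← Nat.card_sigma, Nat.card_congr (Equiv.ofBijective _ (labeling_bijective X n))]
  split_ifs with h
  · rw [Nat.card_eq_fintype_card, Fintype.card_equiv (Fintype.equivFinOfCardEq h), h]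
  · exact Nat.card_eq_zero.2 (.inl ⟨fun e => h (by simpa using Fintype.card_congr e)⟩)

/-- Both sides count, with weight `F`, the plane trees of size `n` whose vertices are labeled. -/
theorem sum_prod_factorial_outdeg_mul {F : FinRootedTree → ℝ≥0∞}
    (hF : FinRootedTree.IsoInvariant F) (n : ℕ) :
    ∑ T : RTree n, (∏ v, (T.outdeg v)! : ℕ) * F T.toRooted =
      n ! * ∑' Q : PlaneTree, if Q.size = n then F Q.toRooted else 0 :=
  calc ∑ T : RTree n, (∏ v, (T.outdeg v)! : ℕ) * F T.toRooted
      = ∑ T : RTree n, ∑' Q : PlaneTree, Nat.card (Q.toRooted.Iso T.toRooted) * F Q.toRooted :=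
        Finset.sum_congr rfl fun T _ => by
          rw [hF.tsum_card_iso_mul]
          simp only [outdeg_toRooted]
    _ = ∑' Q : PlaneTree, ((∑ T : RTree n, Nat.card (Q.toRooted.Iso T.toRooted) : ℕ) : ℝ≥0∞) *
          F Q.toRooted := by
        rw [← Summable.tsum_finsetSum fun _ _ => ENNReal.summable]
        simp only [Nat.cast_sum, Finset.sum_mul]
    _ = ∑' Q : PlaneTree, n ! * if Q.size = n then F Q.toRooted else 0 :=
        tsum_congr fun Q => by
          rw [sum_card_iso, PlaneTree.card_toRooted]
          split_ifs <;> simp only [Nat.cast_zero, zero_mul, mul_zero]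
    _ = n ! * ∑' Q : PlaneTree, if Q.size = n then F Q.toRooted else 0 := ENNReal.tsum_mul_left

end RTree

/-! ### Galton–Watson masses of plane trees -/

theorem tsum_prod_fin {α : Type*} {k : ℕ} (f : Fin k → α → ℝ≥0∞) :
    ∑' c : Fin k → α, ∏ i, f i (c i) = ∏ i, ∑' a, f i a := by
  induction k with
  | zero => simp
  | succ k ih =>
    rw [← (Fin.consEquiv fun _ : Fin (k + 1) => α).tsum_eq, ENNReal.tsum_prod',
      Fin.prod_univ_succ, ← ENNReal.tsum_mul_right]
    refine tsum_congr fun a => ?_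
    rw [← ih, ← ENNReal.tsum_mul_left]
    refine tsum_congr fun c => ?_
    simp only [Fin.prod_univ_succ, Fin.consEquiv_apply, Fin.cons_zero, Fin.cons_succ]

theorem tsum_mul_removeNth {α : Type*} {k : ℕ} (m : Fin (k + 1)) (g : α → ℝ≥0∞)
    (h : (Fin k → α) → ℝ≥0∞) :
    ∑' c : Fin (k + 1) → α, g (c m) * h (m.removeNth c) = (∑' a, g a) * ∑' c, h c := by
  rw [← (Fin.insertNthEquiv (fun _ => α) m).tsum_eq, ENNReal.tsum_prod', ← ENNReal.tsum_mul_right]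
  refine tsum_congr fun a => ?_
  rw [← ENNReal.tsum_mul_left]
  refine tsum_congr fun c => ?_
  have insertNth_eq : Fin.insertNthEquiv (fun _ => α) m (a, c) = m.insertNth a c := rfl
  rw [insertNth_eq, Fin.insertNth_apply_same, Fin.removeNth_insertNth (α := fun _ => α)]

theorem exists_lt_one_forall_tsum_le {α : Type*} {f : α → ℝ≥0∞} (sum_le : ∑' x, f x ≤ 1)
    {a b : α} (ha : f a ≠ 0) (hb : f b ≠ 0) :
    ∃ r : ℝ≥0, r < 1 ∧ ∀ s : α → Prop, ¬ (s a ∧ s b) → ∑' x, (if s x then f x else 0) ≤ r := by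
  have omit_point {s : α → Prop} {x : α} (hx : ¬ s x) :
      ∑' y, (if s y then f y else 0) ≤ 1 - f x := by
    have hx_top : f x ≠ ⊤ := ((ENNReal.le_tsum x).trans sum_le).trans_lt ENNReal.one_lt_top |>.ne
    refine ENNReal.le_sub_of_add_le_right hx_top (le_trans ?_ sum_le)
    rw [← tsum_ite_eq x f, ← ENNReal.tsum_add]
    refine ENNReal.tsum_le_tsum fun y => ?_
    by_cases hy : y = x
    · rw [hy, if_neg hx, if_pos rfl, zero_add]
    · rw [if_neg hy, add_zero]
      split_ifs <;> simp
  have r_lt : 1 - min (f a) (f b) < 1 :=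
    ENNReal.sub_lt_self ENNReal.one_ne_top one_ne_zero (lt_min ha.pos hb.pos).ne'
  lift 1 - min (f a) (f b) to ℝ≥0 using r_lt.ne_top with r hr
  refine ⟨r, by exact_mod_cast r_lt, fun s hs => hr ▸ ?_⟩
  rcases not_and_or.1 hs with h | h
  · exact (omit_point h).trans (tsub_le_tsub_left (min_le_left _ _) _)
  · exact (omit_point h).trans (tsub_le_tsub_left (min_le_right _ _) _)

namespace PlaneTree

theorem tsum_eq_tsum_node (F : PlaneTree → ℝ≥0∞) :
    ∑' Q, F Q = ∑' k, ∑' c : Fin k → PlaneTree, F (node k c) := by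
  rw [← nodeEquiv.tsum_eq, ENNReal.tsum_sigma']
  rfl

/-- The weight of a plane tree whose root is weighted by `r` instead of `w`. -/
def rootWeight {M : Type*} [CommMonoid M] (r w : ℕ → M) : PlaneTree → M
  | node k c => r k * ∏ i, (c i).weight w

theorem rootWeight_node {M : Type*} [CommMonoid M] (r w : ℕ → M) {k : ℕ} (c : Fin k → PlaneTree) :
    (node k c).rootWeight r w = r k * ∏ i, (c i).weight w := rfl

theorem rootWeight_self {M : Type*} [CommMonoid M] (w : ℕ → M) : rootWeight w w = weight w := by
  ext ⟨k, c⟩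
  rfl

theorem tsum_rootWeight (r w : ℕ → ℝ≥0∞) :
    ∑' Q, rootWeight r w Q = ∑' k, r k * (∑' Q, weight w Q) ^ k := by
  rw [tsum_eq_tsum_node]
  refine tsum_congr fun k => ?_
  simp only [rootWeight_node, ENNReal.tsum_mul_left, tsum_prod_fin, Finset.prod_const,
    Finset.card_univ, Fintype.card_fin]

theorem tsum_weight (w : ℕ → ℝ≥0∞) :
    ∑' Q, weight w Q = ∑' k, w k * (∑' Q, weight w Q) ^ k := by
  conv_lhs => rw [← rootWeight_self, tsum_rootWeight]

/-- The weight of the part of a tree with offspring weights `w` that remains when a marked branch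
at the root is removed; the factor `k + 1` counts the positions of that branch. -/
noncomputable abbrev spineWeight (w : ℕ → ℝ≥0∞) : PlaneTree → ℝ≥0∞ :=
  rootWeight (fun k => (k + 1 : ℕ) * w (k + 1)) w

theorem size_pos : ∀ Q : PlaneTree, 0 < Q.size
  | node _ _ => Nat.lt_add_right _ Nat.one_pos

theorem size_lt_size_node {k : ℕ} (c : Fin k → PlaneTree) (i : Fin k) :
    (c i).size < (node k c).size := by
  have := Finset.single_le_sum (f := fun i => (c i).size) (fun _ _ => zero_le) (Finset.mem_univ i)
  rw [size_node]
  lia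

theorem tsum_weight_of_size_le_le_one {w : ℕ → ℝ≥0∞} (hw : ∑' k, w k ≤ 1) (N : ℕ) :
    ∑' Q : PlaneTree, (if Q.size ≤ N then Q.weight w else 0) ≤ 1 := by
  induction N with
  | zero => simp [fun Q => (size_pos Q).ne']
  | succ N ih =>
    have node_le (k : ℕ) (c : Fin k → PlaneTree) :
        (if (node k c).size ≤ N + 1 then (node k c).weight w else 0) ≤
          w k * ∏ i, if (c i).size ≤ N then (c i).weight w else 0 := by
      split_ifs with h
      · rw [weight_node]
        gcongr with i
        rw [if_pos (Nat.le_of_lt_succ ((size_lt_size_node c i).trans_le h))]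
      · exact zero_le
    calc ∑' Q : PlaneTree, (if Q.size ≤ N + 1 then Q.weight w else 0)
        ≤ ∑' k, w k * (∑' Q : PlaneTree, if Q.size ≤ N then Q.weight w else 0) ^ k := by
          rw [tsum_eq_tsum_node]
          refine ENNReal.tsum_le_tsum fun k => (ENNReal.tsum_le_tsum (node_le k)).trans_eq ?_
          rw [ENNReal.tsum_mul_left, tsum_prod_fin fun _ (Q : PlaneTree) =>
            if Q.size ≤ N then Q.weight w else 0, Fin.prod_const]
      _ ≤ ∑' k, w k :=
          ENNReal.tsum_le_tsum fun k => mul_le_of_le_one_right' (pow_le_one₀ zero_le ih)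
      _ ≤ 1 := hw

theorem tsum_weight_le_one {w : ℕ → ℝ≥0∞} (hw : ∑' k, w k ≤ 1) :
    ∑' Q : PlaneTree, Q.weight w ≤ 1 := by
  rw [ENNReal.tsum_eq_iSup_sum]
  refine iSup_le fun s => le_trans ?_ (tsum_weight_of_size_le_le_one hw (s.sup size))
  refine le_trans (Finset.sum_le_sum fun Q hQ => ?_) (ENNReal.sum_le_tsum s)
  rw [if_pos (Finset.le_sup (f := size) hQ)]

end PlaneTree

/-- Critical offspring distributions of Galton–Watson trees: probability distributions on `ℕ` with
mean `1`. The condition `p 0 ≠ 0` excludes only the distribution concentrated at `1`. -/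
structure IsCritical (p : ℕ → ℝ≥0∞) : Prop where
  tsum_eq_one : ∑' k, p k = 1
  mean_eq_one : ∑' k, k * p k = 1
  zero_ne_zero : p 0 ≠ 0

namespace IsCritical

variable {p : ℕ → ℝ≥0∞}

theorem le_one (hp : IsCritical p) (k : ℕ) : p k ≤ 1 := hp.tsum_eq_one ▸ ENNReal.le_tsum k

theorem tsum_succ_mul (hp : IsCritical p) : ∑' k : ℕ, (k + 1 : ℕ) * p (k + 1) = 1 := by
  rw [← hp.mean_eq_one, tsum_eq_zero_add' ENNReal.summable (f := fun k : ℕ => k * p k),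
    Nat.cast_zero, zero_mul, zero_add]

theorem exists_add_two_ne_zero (hp : IsCritical p) : ∃ e, p (e + 2) ≠ 0 := by
  by_contra! h
  have one_eq : p 1 = 1 := by
    have := hp.tsum_succ_mul
    rwa [tsum_eq_single 0 fun k hk => by
      rw [← Nat.succ_pred_eq_of_ne_zero hk, h, mul_zero], zero_add, Nat.cast_one, one_mul] at this
  have : p 0 + 1 ≤ 0 + 1 := by
    calc p 0 + 1
        = ∑ k ∈ Finset.range 2, p k := by rw [Finset.sum_range_succ, Finset.sum_range_one, one_eq]
      _ ≤ ∑' k, p k := ENNReal.sum_le_tsum _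
      _ = 0 + 1 := by rw [hp.tsum_eq_one, zero_add]
  exact hp.zero_ne_zero
    (nonpos_iff_eq_zero.1 (ENNReal.le_of_add_le_add_right ENNReal.one_ne_top this))

end IsCritical

/-! ### The mass of a shape -/

namespace FinRootedTree

open PlaneTree

/-- The total `f`-mass of the plane trees whose underlying rooted tree is isomorphic to `X`. -/
noncomputable def shapeMass (f : PlaneTree → ℝ≥0∞) (X : FinRootedTree) : ℝ≥0∞ :=
  ∑' Q : PlaneTree, if Nonempty (Q.toRooted.Iso X) then f Q else 0

theorem IsoInvariant.shapeMass (f : PlaneTree → ℝ≥0∞) : IsoInvariant (shapeMass f) :=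
  fun _ _ g => tsum_congr fun Q => by simp only [(g.transEquiv (X := Q.toRooted)).nonempty_congr]

theorem shapeMass_le_tsum (f : PlaneTree → ℝ≥0∞) (X : FinRootedTree) :
    shapeMass f X ≤ ∑' Q, f Q :=
  ENNReal.tsum_le_tsum fun Q => by split_ifs <;> simp

theorem shapeMass_le_tsum_size (f : PlaneTree → ℝ≥0∞) (X : FinRootedTree) :
    shapeMass f X ≤ ∑' Q : PlaneTree, if Q.size = Fintype.card X.V then f Q else 0 := by
  refine ENNReal.tsum_le_tsum fun Q => ?_
  by_cases h : Nonempty (Q.toRooted.Iso X)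
  · rw [if_pos h, if_pos]
    rw [← card_toRooted, Fintype.card_congr h.some.1.toEquiv]
  · rw [if_neg h]
    exact zero_le

theorem shapeMass_join_le_tsum (w : ℕ → ℝ≥0∞) {k : ℕ} (X : Fin k → FinRootedTree) :
    shapeMass (weight w) (join X) ≤ w k * ∑' c : Fin k → PlaneTree,
      if ∃ σ : Fin k ≃ Fin k, ∀ i, Nonempty ((c i).toRooted.Iso (X (σ i)))
        then ∏ i, (c i).weight w else 0 := by
  have exists_perm {l : ℕ} {c : Fin l → PlaneTree}
      (h : Nonempty ((node l c).toRooted.Iso (join X))) :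
      ∃ σ : Fin l ≃ Fin k, ∀ i, Nonempty ((c i).toRooted.Iso (X (σ i))) := by
    obtain ⟨⟨σ, f⟩, -⟩ := joinIso_surjective h.some
    exact ⟨σ, fun i => ⟨f i⟩⟩
  rw [shapeMass, tsum_eq_tsum_node, tsum_eq_single k, ← ENNReal.tsum_mul_left]
  · refine ENNReal.tsum_le_tsum fun c => ?_
    by_cases h : Nonempty ((node k c).toRooted.Iso (join X))
    · rw [if_pos h, if_pos (exists_perm h), weight_node]
    · rw [if_neg h]
      exact zero_le
  · refine fun l hl => ENNReal.tsum_eq_zero.2 fun c => if_neg fun h => hl ?_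
    simpa using Fintype.card_congr (exists_perm h).choose

theorem shapeMass_join_le_prod (w : ℕ → ℝ≥0∞) {k : ℕ} (X : Fin k → FinRootedTree) :
    shapeMass (weight w) (join X) ≤ k ! * w k * ∏ i, shapeMass (weight w) (X i) := by
  set summand := fun (i : Fin k) (Q : PlaneTree) =>
    if Nonempty (Q.toRooted.Iso (X i)) then Q.weight w else 0
  calc shapeMass (weight w) (join X)
      ≤ w k * ∑' c : Fin k → PlaneTree, ∑ σ : Fin k ≃ Fin k, ∏ i, summand (σ i) (c i) := by
        refine (shapeMass_join_le_tsum w X).trans ?_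
        gcongr with c
        split_ifs with h
        · obtain ⟨σ, hσ⟩ := h
          calc ∏ i, (c i).weight w
              = ∏ i, summand (σ i) (c i) :=
                Finset.prod_congr rfl fun i _ => (if_pos (hσ i)).symm
            _ ≤ ∑ σ : Fin k ≃ Fin k, ∏ i, summand (σ i) (c i) :=
                Finset.single_le_sum (f := fun σ : Fin k ≃ Fin k => ∏ i, summand (σ i) (c i))
                  (fun _ _ => zero_le) (Finset.mem_univ σ)
        · exact zero_le
    _ = w k * ∑ _σ : Fin k ≃ Fin k, ∏ i, shapeMass (weight w) (X i) := by
        rw [Summable.tsum_finsetSum fun _ _ => ENNReal.summable]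
        congr! 2 with σ
        rw [tsum_prod_fin fun i => summand (σ i)]
        exact σ.prod_comp fun i => shapeMass (weight w) (X i)
    _ = k ! * w k * ∏ i, shapeMass (weight w) (X i) := by
        rw [Finset.sum_const, Finset.card_univ, Fintype.card_perm, Fintype.card_fin, nsmul_eq_mul]
        ring

theorem shapeMass_join_eq_zero {w : ℕ → ℝ≥0∞} {k : ℕ} (hk : w k = 0) (X : Fin k → FinRootedTree) :
    shapeMass (weight w) (join X) = 0 := by
  simpa only [hk, mul_zero, zero_mul, nonpos_iff_eq_zero] using shapeMass_join_le_prod w X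

theorem exists_iso_removeNth {k : ℕ} {X : Fin (k + 1) → FinRootedTree}
    {c : Fin (k + 1) → PlaneTree}
    (hc : ∃ σ : Fin (k + 1) ≃ Fin (k + 1), ∀ i, Nonempty ((c i).toRooted.Iso (X (σ i))))
    (j : Fin (k + 1)) :
    ∃ m, Nonempty ((c m).toRooted.Iso (X j)) ∧
      Nonempty ((node k (m.removeNth c)).toRooted.Iso (join fun i : {i // i ≠ j} => X i)) := by
  obtain ⟨σ, hσ⟩ := hc
  obtain ⟨m, rfl⟩ := σ.surjective j
  let τ : Fin k ≃ {i // i ≠ σ m} :=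
    (finSuccAboveEquiv m).trans (σ.subtypeEquiv fun _ => σ.injective.ne_iff.symm)
  exact ⟨m, hσ m, ⟨joinIso ⟨τ, fun i => (hσ (m.succAbove i)).some⟩⟩⟩

-- A plane tree with the shape of `join X` has a branch with the shape of `X j`, in one of `k + 1`
-- positions, and removing it leaves a plane tree with the shape of the other branches joined.
theorem shapeMass_join_le_spineWeight_mul (w : ℕ → ℝ≥0∞) {k : ℕ} (X : Fin (k + 1) → FinRootedTree)
    (j : Fin (k + 1)) :
    shapeMass (weight w) (join X) ≤
      shapeMass (spineWeight w) (join fun i : {i // i ≠ j} => X i) *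
        shapeMass (weight w) (X j) := by
  set Y := join fun i : {i // i ≠ j} => X i
  set g := fun Q : PlaneTree => if Nonempty (Q.toRooted.Iso (X j)) then Q.weight w else 0
  set h := fun c : Fin k → PlaneTree =>
    if Nonempty ((node k c).toRooted.Iso Y) then ∏ i, (c i).weight w else 0
  calc shapeMass (weight w) (join X)
      ≤ w (k + 1) * ∑' c : Fin (k + 1) → PlaneTree, ∑ m, g (c m) * h (m.removeNth c) := by
        refine (shapeMass_join_le_tsum w X).trans ?_
        gcongr with c
        split_ifs with hc
        · obtain ⟨m, iso_branch, iso_rest⟩ := exists_iso_removeNth hc j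
          refine le_trans ?_ (Finset.single_le_sum (fun _ _ => zero_le) (Finset.mem_univ m))
          rw [Fin.prod_univ_succAbove _ m]
          simp only [g, h, Y, if_pos iso_branch, if_pos iso_rest, Fin.removeNth_apply, le_refl]
        · exact zero_le
    _ = (k + 1 : ℕ) * w (k + 1) * (∑' c, h c) * shapeMass (weight w) (X j) := by
        rw [Summable.tsum_finsetSum fun _ _ => ENNReal.summable]
        simp only [tsum_mul_removeNth, Fin.sum_const, nsmul_eq_mul]
        rw [shapeMass]
        ring
    _ ≤ shapeMass (spineWeight w) Y * shapeMass (weight w) (X j) := by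
        gcongr
        rw [shapeMass, tsum_eq_tsum_node, ← ENNReal.tsum_mul_left]
        refine le_trans ?_ (ENNReal.le_tsum k)
        simp only [h, mul_ite, mul_zero, rootWeight_node, le_refl]

end FinRootedTree

namespace IsCritical

open PlaneTree FinRootedTree

variable {p : ℕ → ℝ≥0∞}

theorem tsum_weight_le_one (hp : IsCritical p) : ∑' Q, weight p Q ≤ 1 :=
  PlaneTree.tsum_weight_le_one hp.tsum_eq_one.le

theorem tsum_spineWeight_le_one (hp : IsCritical p) : ∑' Q, spineWeight p Q ≤ 1 := by
  rw [tsum_rootWeight, ← hp.tsum_succ_mul]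
  exact ENNReal.tsum_le_tsum fun k =>
    mul_le_of_le_one_right' (pow_le_one₀ zero_le hp.tsum_weight_le_one)

theorem exists_spineWeight_ne_zero (hp : IsCritical p) :
    ∃ P Q : PlaneTree, P.size ≠ Q.size ∧ spineWeight p P ≠ 0 ∧ spineWeight p Q ≠ 0 := by
  obtain ⟨e, he⟩ := hp.exists_add_two_ne_zero
  let leaf : PlaneTree := node 0 Fin.elim0
  let star : PlaneTree := node (e + 2) fun _ => leaf
  have leaf_ne_zero : leaf.weight p ≠ 0 := by simpa [leaf, weight_node] using hp.zero_ne_zero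
  have star_ne_zero : star.weight p ≠ 0 := by
    simpa [star, weight_node, he] using leaf_ne_zero
  refine ⟨node (e + 1) fun _ => leaf, node (e + 1) fun _ => star, ?_, ?_, ?_⟩
  · simp [size_node, leaf, star]
  · simp [rootWeight_node, he, leaf_ne_zero]
  · simp [rootWeight_node, he, star_ne_zero]

theorem exists_shapeMass_spineWeight_le (hp : IsCritical p) :
    ∃ r : ℝ≥0, r < 1 ∧ ∀ X, shapeMass (spineWeight p) X ≤ r := by
  obtain ⟨P, Q, size_ne, hP, hQ⟩ := hp.exists_spineWeight_ne_zero
  obtain ⟨r, r_lt, hr⟩ := exists_lt_one_forall_tsum_le hp.tsum_spineWeight_le_one hP hQ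
  refine ⟨r, r_lt, fun X => hr _ fun ⟨⟨f⟩, ⟨g⟩⟩ => size_ne ?_⟩
  rw [← card_toRooted, ← card_toRooted]
  exact Fintype.card_congr (f.trans g.symm).1.toEquiv

end IsCritical

theorem exists_pow_eq_of_lt_one {ε : ℝ≥0} (h₀ : 0 < ε) (h₁ : ε < 1) {m : ℕ} (hm : m ≠ 0) :
    ∃ q : ℝ≥0, 0 < q ∧ q < 1 ∧ q ^ m = ε :=
  ⟨ε ^ (m : ℝ)⁻¹, NNReal.rpow_pos h₀, NNReal.rpow_lt_one h₁ (by positivity),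
    NNReal.rpow_inv_natCast_pow _ hm⟩

namespace PlaneTree

section

variable {k N Δ : ℕ} {c : Fin k → PlaneTree}

theorem size_node_le_of_forall_le (hk : k ≤ Δ) (hc : ∀ i, (c i).size ≤ N) :
    (node k c).size ≤ Δ * N + 1 :=
  calc (node k c).size = 1 + ∑ i, (c i).size := size_node c
    _ ≤ 1 + k * N := by
        grw [Finset.sum_le_card_nsmul _ _ N fun i _ => hc i, Finset.card_fin, smul_eq_mul]
    _ ≤ Δ * N + 1 := by
        rw [add_comm]
        gcongr

theorem size_node_le_of_forall_ne_le (hk : k ≤ Δ) {j : Fin k} (hc : ∀ i ≠ j, (c i).size ≤ N) :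
    (node k c).size ≤ (c j).size + (Δ * N + 1) := by
  have others_le : ∑ i ∈ Finset.univ.erase j, (c i).size ≤ Δ * N :=
    calc ∑ i ∈ Finset.univ.erase j, (c i).size
        ≤ (Finset.univ.erase j).card * N :=
          Finset.sum_le_card_nsmul _ _ N fun i hi => hc i (Finset.ne_of_mem_erase hi)
      _ ≤ Δ * N := by
          gcongr
          exact (Finset.card_le_univ _).trans (by rwa [Fintype.card_fin])
  rw [size_node, ← Finset.add_sum_erase _ _ (Finset.mem_univ j)]
  lia

variable {M : PlaneTree → ℝ≥0} {K r η q : ℝ≥0} {L : ℕ}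

theorem mul_pow_le_of_one_large {s n : ℕ} {m m' : ℝ≥0} (hm : m' ≤ r * m) (hr : r ≤ q ^ L)
    (hq : q ≤ 1) (h : m * q ^ L ≤ η * q ^ s) (hn : n ≤ s + L) : m' * q ^ L ≤ η * q ^ n :=
  calc m' * q ^ L ≤ q ^ L * m * q ^ L := by grw [hm, hr]
    _ = q ^ L * (m * q ^ L) := mul_assoc _ _ _
    _ ≤ q ^ L * (η * q ^ s) := by grw [h]
    _ = η * q ^ (s + L) := by ring
    _ ≤ η * q ^ n := by grw [pow_le_pow_of_le_one zero_le hq hn]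

theorem mul_pow_le_of_two_large (hM : ∀ P, M P ≤ 1) (hη : η ≤ 1) (hq₀ : 0 < q) (hq : q ≤ 1)
    (hNL : N ≤ L) (hK : K * η ≤ q ^ (L * k + 1)) (hc : M (node k c) ≤ K * ∏ i, M (c i))
    (ih : ∀ i, N ≤ (c i).size → M (c i) * q ^ L ≤ η * q ^ (c i).size) {i j : Fin k} (hij : i ≠ j)
    (hi : N ≤ (c i).size) (hj : N ≤ (c j).size) : M (node k c) ≤ η * q ^ (node k c).size := by
  set t : Fin k → ℝ≥0 := fun i => if N ≤ (c i).size then η else 1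
  have child_le (i : Fin k) : M (c i) * q ^ L ≤ t i * q ^ (c i).size := by
    by_cases h : N ≤ (c i).size
    · simp only [t, if_pos h, ih i h]
    · simp only [t, if_neg h]
      exact mul_le_mul' (hM _) (pow_le_pow_of_le_one zero_le hq (by lia))
  have prod_le : ∏ i, t i ≤ η * η :=
    calc ∏ i, t i ≤ ∏ i ∈ {i, j}, t i :=
          Finset.prod_le_prod_of_subset_of_le_one' (Finset.subset_univ _) fun i _ _ => by
            simp only [t]
            split_ifs <;> simp [hη]
      _ = η * η := by rw [Finset.prod_pair hij]; simp only [t, if_pos hi, if_pos hj]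
  refine le_of_mul_le_mul_right ?_ (pow_pos hq₀ (L * k + 1))
  calc M (node k c) * q ^ (L * k + 1)
      ≤ K * (∏ i, M (c i)) * q ^ (L * k + 1) := by gcongr
    _ = K * (∏ i, M (c i) * q ^ L) * q := by
        rw [Finset.prod_mul_distrib, Fin.prod_const]
        ring
    _ ≤ K * (∏ i, t i * q ^ (c i).size) * q := by grw [Finset.prod_le_prod' fun i _ => child_le i]
    _ = K * (∏ i, t i) * q ^ (node k c).size := by
        rw [Finset.prod_mul_distrib, Finset.prod_pow_eq_pow_sum, size_node]
        ring
    _ ≤ K * (η * η) * q ^ (node k c).size := by grw [prod_le]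
    _ = K * η * (η * q ^ (node k c).size) := by ring
    _ ≤ η * q ^ (node k c).size * q ^ (L * k + 1) := by grw [hK, mul_comm]

theorem mul_pow_le_of_le_size (le_one : ∀ P, M P ≤ 1)
    (le_prod : ∀ {k} (c : Fin k → PlaneTree), M (node k c) ≤ K * ∏ i, M (c i))
    (le_branch : ∀ {k} (c : Fin k → PlaneTree) (j), M (node k c) ≤ r * M (c j))
    (eq_zero : ∀ {k} (c : Fin k → PlaneTree), Δ < k → M (node k c) = 0)
    (small : ∀ P : PlaneTree, N ≤ P.size → M P ≤ η)
    (hη : η ≤ 1) (hq₀ : 0 < q) (hq : q ≤ 1) (hNL : N ≤ L) (hL : Δ * N + 1 ≤ L) (hr : r ≤ q ^ L)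
    (hK : K * η ≤ q ^ (L * Δ + 1)) (P : PlaneTree) (hP : N ≤ P.size) :
    M P * q ^ L ≤ η * q ^ P.size := by
  have pow_anti {a b : ℕ} (h : a ≤ b) : q ^ b ≤ q ^ a := pow_le_pow_of_le_one zero_le hq h
  induction P with
  | node k c ih =>
    rcases lt_or_ge Δ k with hk | hk
    · rw [eq_zero c hk, zero_mul]
      exact zero_le
    by_cases exists_large : ∃ j, N ≤ (c j).size
    · obtain ⟨j, hj⟩ := exists_large
      by_cases exists_large_ne : ∃ i, i ≠ j ∧ N ≤ (c i).size
      · obtain ⟨i, hij, hi⟩ := exists_large_ne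
        have hKk : K * η ≤ q ^ (L * k + 1) := hK.trans (pow_anti (by gcongr))
        grw [mul_pow_le_of_two_large le_one hη hq₀ hq hNL hKk (le_prod c) ih hij hi hj]
        exact mul_le_of_le_one_right' (pow_le_one₀ zero_le hq)
      · push Not at exists_large_ne
        exact mul_pow_le_of_one_large (le_branch c j) hr hq (ih j hj)
          ((size_node_le_of_forall_ne_le hk fun i hi => (exists_large_ne i hi).le).trans
            (by gcongr))
    · push Not at exists_large
      have size_le := size_node_le_of_forall_le hk fun i => (exists_large i).le
      exact mul_le_mul' (small _ hP) (pow_anti (size_le.trans hL))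

end

theorem exists_le_mul_pow_size {M : PlaneTree → ℝ≥0} {K r : ℝ≥0} {Δ : ℕ} (hr : r < 1)
    (le_one : ∀ P, M P ≤ 1)
    (le_prod : ∀ {k} (c : Fin k → PlaneTree), M (node k c) ≤ K * ∏ i, M (c i))
    (le_branch : ∀ {k} (c : Fin k → PlaneTree) (j), M (node k c) ≤ r * M (c j))
    (eq_zero : ∀ {k} (c : Fin k → PlaneTree), Δ < k → M (node k c) = 0)
    (small : ∀ η > 0, ∃ N, ∀ P : PlaneTree, N ≤ P.size → M P ≤ η) :
    ∃ B q : ℝ≥0, 0 < q ∧ q < 1 ∧ ∀ P : PlaneTree, M P ≤ B * q ^ P.size := by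
  obtain ⟨η, hη₀, hη₁, hηK⟩ : ∃ η : ℝ≥0, 0 < η ∧ η ≤ 1 ∧ K * η ≤ 1 / 2 := by
    refine ⟨1 / (2 * (K + 1)), by positivity, ?_, ?_⟩
    · exact div_le_one_of_le₀ (one_le_mul one_le_two le_add_self) zero_le
    · rw [mul_one_div, div_le_div_iff₀ (by positivity) two_pos, one_mul, mul_comm]
      exact mul_le_mul_right le_self_add 2
  obtain ⟨N, hN⟩ := small η hη₀
  set L := Δ * N + 1 + N
  obtain ⟨q, hq₀, hq₁, hq⟩ : ∃ q : ℝ≥0, 0 < q ∧ q < 1 ∧ q ^ (L * Δ + 1 + L) = max r (1 / 2) :=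
    exists_pow_eq_of_lt_one (by positivity) (max_lt hr (NNReal.half_lt_self one_ne_zero)) (by lia)
  have pow_anti {a b : ℕ} (h : a ≤ b) : q ^ b ≤ q ^ a := pow_le_pow_of_le_one zero_le hq₁.le h
  have large (P : PlaneTree) (hP : N ≤ P.size) : M P * q ^ L ≤ η * q ^ P.size := by
    refine mul_pow_le_of_le_size le_one le_prod le_branch eq_zero hN hη₁ hq₀ hq₁.le (by lia)
      (by lia) ?_ ?_ P hP
    · exact (le_max_left r (1 / 2)).trans (hq.ge.trans (pow_anti (by lia)))
    · exact hηK.trans ((le_max_right r (1 / 2)).trans (hq.ge.trans (pow_anti (by lia))))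
  refine ⟨1 / q ^ L, q, hq₀, hq₁, fun P => ?_⟩
  rw [div_mul_eq_mul_div, le_div_iff₀ (by positivity)]
  by_cases hP : N ≤ P.size
  · exact (large P hP).trans (by gcongr)
  · exact mul_le_mul' (le_one P) (pow_anti (by lia))

end PlaneTree

/-! ### The mass of a size -/

theorem one_add_mul_le_pow_add (x : ℝ≥0) (k : ℕ) : (1 + k * x : ℝ≥0∞) ≤ (x : ℝ≥0∞) ^ k + k := by
  have bernoulli := one_add_mul_sub_le_pow (a := (x : ℝ)) (by linarith [x.coe_nonneg]) k
  have : (1 + k * x : ℝ≥0) ≤ x ^ k + k := by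
    rw [← NNReal.coe_le_coe]
    push_cast
    linarith
  exact_mod_cast this

namespace PlaneTree

/-- The total weight of the plane trees of size `n`. -/
noncomputable def sizeMass (w : ℕ → ℝ≥0∞) (n : ℕ) : ℝ≥0∞ :=
  ∑' Q : PlaneTree, if Q.size = n then Q.weight w else 0

theorem tsum_sizeMass_mul_pow (w : ℕ → ℝ≥0∞) (z : ℝ≥0∞) :
    ∑' n, sizeMass w n * z ^ n = ∑' Q : PlaneTree, Q.weight w * z ^ Q.size := by
  simp only [sizeMass, ← ENNReal.tsum_mul_right, ite_mul, zero_mul]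
  rw [ENNReal.tsum_comm]
  refine tsum_congr fun Q => ?_
  rw [tsum_eq_single Q.size fun n hn => if_neg hn.symm, if_pos rfl]

theorem weight_mul_left {M : Type*} [CommMonoid M] (z : M) (w : ℕ → M) (Q : PlaneTree) :
    Q.weight (fun k => z * w k) = Q.weight w * z ^ Q.size := by
  induction Q with
  | node k c ih =>
    simp only [weight_node, ih, Finset.prod_mul_distrib, Finset.prod_pow_eq_pow_sum, size_node,
      pow_add, pow_one]
    ac_rfl

end PlaneTree

namespace IsCritical

open PlaneTree FinRootedTree

variable {p : ℕ → ℝ≥0∞}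

theorem tsum_sizeMass_le_one (hp : IsCritical p) : ∑' n, sizeMass p n ≤ 1 := by
  have total := tsum_sizeMass_mul_pow p 1
  simp only [one_pow, mul_one] at total
  exact total.trans_le hp.tsum_weight_le_one

theorem sizeMass_ne_top (hp : IsCritical p) (n : ℕ) : sizeMass p n ≠ ⊤ :=
  ((ENNReal.le_tsum n).trans hp.tsum_sizeMass_le_one).trans_lt ENNReal.one_lt_top |>.ne

theorem shapeMass_ne_top (hp : IsCritical p) (X : FinRootedTree) : shapeMass (weight p) X ≠ ⊤ :=
  ((shapeMass_le_tsum _ X).trans hp.tsum_weight_le_one).trans_lt ENNReal.one_lt_top |>.ne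

theorem exists_shapeMass_le_of_le_size (hp : IsCritical p) {η : ℝ≥0∞} (hη : 0 < η) :
    ∃ N, ∀ P : PlaneTree, N ≤ P.size → shapeMass (weight p) P.toRooted ≤ η := by
  have sizeMass_tendsto := ENNReal.tendsto_atTop_zero_of_tsum_ne_top
    (hp.tsum_sizeMass_le_one.trans_lt ENNReal.one_lt_top).ne
  obtain ⟨N, hN⟩ := ENNReal.tendsto_atTop_zero.1 sizeMass_tendsto η hη
  refine ⟨N, fun P hP => (shapeMass_le_tsum_size _ _).trans ?_⟩
  rw [card_toRooted]
  exact hN P.size hP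

theorem shapeMass_join_le_factorial_mul_prod (hp : IsCritical p) {Δ : ℕ}
    (hΔ : ∀ k, Δ < k → p k = 0) {k : ℕ} (X : Fin k → FinRootedTree) :
    shapeMass (weight p) (join X) ≤ Δ ! * ∏ i, shapeMass (weight p) (X i) := by
  rcases lt_or_ge Δ k with hk | hk
  · exact (shapeMass_join_eq_zero (hΔ k hk) X).trans_le zero_le
  · refine (shapeMass_join_le_prod p X).trans ?_
    gcongr
    exact (mul_le_of_le_one_right' (hp.le_one k)).trans (by gcongr)

theorem exists_shapeMass_le_mul_pow (hp : IsCritical p) {Δ : ℕ} (hΔ : ∀ k, Δ < k → p k = 0) :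
    ∃ B q : ℝ≥0, 0 < q ∧ q < 1 ∧
      ∀ X : FinRootedTree, shapeMass (weight p) X ≤ B * q ^ Fintype.card X.V := by
  obtain ⟨M, hM⟩ : ∃ M : PlaneTree → ℝ≥0, ∀ P, M P = shapeMass (weight p) P.toRooted :=
    ⟨_, fun P => ENNReal.coe_toNNReal (hp.shapeMass_ne_top P.toRooted)⟩
  obtain ⟨r, hr, spine_le⟩ := hp.exists_shapeMass_spineWeight_le
  have eq_zero {k} (c : Fin k → PlaneTree) (hk : Δ < k) : M (node k c) = 0 := by
    have := shapeMass_join_eq_zero (hΔ k hk) fun i => (c i).toRooted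
    rw [← toRooted_node, ← hM] at this
    exact_mod_cast this
  have le_prod {k} (c : Fin k → PlaneTree) : M (node k c) ≤ Δ ! * ∏ i, M (c i) := by
    have := hp.shapeMass_join_le_factorial_mul_prod hΔ fun i => (c i).toRooted
    simp only [← toRooted_node, ← hM] at this
    exact_mod_cast this
  have le_branch {k} (c : Fin k → PlaneTree) (j : Fin k) : M (node k c) ≤ r * M (c j) := by
    obtain _ | k := k
    · exact j.elim0
    have := shapeMass_join_le_spineWeight_mul p (fun i => (c i).toRooted) j
    grw [spine_le, ← hM, ← toRooted_node, ← hM] at this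
    exact_mod_cast this
  have le_one (P) : M P ≤ 1 := by
    exact_mod_cast (hM P).trans_le ((shapeMass_le_tsum _ _).trans hp.tsum_weight_le_one)
  have small (η : ℝ≥0) (hη : η > 0) : ∃ N, ∀ P : PlaneTree, N ≤ P.size → M P ≤ η := by
    obtain ⟨N, hN⟩ := hp.exists_shapeMass_le_of_le_size (ENNReal.coe_pos.2 hη)
    exact ⟨N, fun P hP => by exact_mod_cast (hM P).trans_le (hN P hP)⟩
  obtain ⟨B, q, hq₀, hq₁, hB⟩ := exists_le_mul_pow_size hr le_one le_prod le_branch eq_zero small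
  refine ⟨B, q, hq₀, hq₁, fun X => ?_⟩
  obtain ⟨P, ⟨f⟩⟩ := X.exists_planeTree_iso
  rw [← IsoInvariant.shapeMass _ f, ← hM, ← Fintype.card_congr f.1.toEquiv, card_toRooted]
  exact_mod_cast hB P

theorem le_tsum_mul_pow (hp : IsCritical p) (x : ℝ≥0) :
    (x : ℝ≥0∞) ≤ ∑' k, p k * (x : ℝ≥0∞) ^ k := by
  refine ENNReal.le_of_add_le_add_right ENNReal.one_ne_top ?_
  calc (x : ℝ≥0∞) + 1
      = (∑' k, k * p k) * x + ∑' k, p k := by rw [hp.mean_eq_one, hp.tsum_eq_one, one_mul]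
    _ = ∑' k, p k * (1 + k * x) := by
        rw [← ENNReal.tsum_mul_right, ← ENNReal.tsum_add]
        exact tsum_congr fun k => by ring
    _ ≤ ∑' k, p k * (x ^ k + k) :=
        ENNReal.tsum_le_tsum fun k => mul_le_mul_right (one_add_mul_le_pow_add x k) _
    _ = ∑' k, p k * (x : ℝ≥0∞) ^ k + 1 := by
        simp only [mul_add, ENNReal.tsum_add, mul_comm (p _) (Nat.cast _), hp.mean_eq_one]

theorem tsum_sizeMass_mul_pow_eq_top (hp : IsCritical p) {z : ℝ≥0} (hz : 1 < z) :
    ∑' n, sizeMass p n * (z : ℝ≥0∞) ^ n = ⊤ := by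
  simp only [tsum_sizeMass_mul_pow, ← weight_mul_left]
  by_contra h
  lift ∑' Q : PlaneTree, Q.weight (fun k => z * p k) to ℝ≥0 using h with x hx
  have fixed_point : (x : ℝ≥0∞) = z * ∑' k, p k * (x : ℝ≥0∞) ^ k := by
    have := tsum_weight fun k => z * p k
    rw [← hx] at this
    simpa only [mul_assoc, ENNReal.tsum_mul_left] using this
  have x_pos : 0 < x := by
    refine pos_iff_ne_zero.2 fun hx₀ => hp.zero_ne_zero ?_
    rw [hx₀, ENNReal.coe_zero, eq_comm, mul_eq_zero, ENNReal.tsum_eq_zero] at fixed_point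
    simpa using (fixed_point.resolve_left (by exact_mod_cast (one_pos.trans hz).ne')) 0
  have : (z * x : ℝ≥0∞) ≤ x := by
    conv_rhs => rw [fixed_point]
    exact mul_le_mul_right (hp.le_tsum_mul_pow x) _
  exact absurd (by exact_mod_cast this : z * x ≤ x) (lt_mul_of_one_lt_left x_pos hz).not_ge

end IsCritical

section

variable {u : ℕ → ℝ≥0} {q : ℝ≥0}

theorem mul_pow_pow_le_of_mul_le_add (hu : ∀ n m, u n * u m ≤ u (n + m)) {n₀ : ℕ}
    (hn₀ : q ^ n₀ ≤ u n₀) (n j : ℕ) : u n * (q ^ n₀) ^ j ≤ u (n + n₀ * j) := by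
  induction j with
  | zero => simp
  | succ j ih =>
    calc u n * (q ^ n₀) ^ (j + 1) = u n * (q ^ n₀) ^ j * q ^ n₀ := by ring
      _ ≤ u (n + n₀ * j) * u n₀ := by gcongr
      _ ≤ u (n + n₀ * j + n₀) := hu _ _
      _ = u (n + n₀ * (j + 1)) := by ring_nf

theorem exists_mul_pow_le_of_mod_eq (hu : ∀ n m, u n * u m ≤ u (n + m)) (hq : 0 < q) {n₀ : ℕ}
    (hn₀ : q ^ n₀ ≤ u n₀) (i : ℕ) :
    ∃ κ > 0, ∀ n, n % n₀ = i → u n ≠ 0 → κ * q ^ n ≤ u n := by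
  by_cases h : ∃ n, n % n₀ = i ∧ u n ≠ 0
  · let m := Nat.find h
    obtain ⟨hm_mod, hm⟩ : m % n₀ = i ∧ u m ≠ 0 := Nat.find_spec h
    refine ⟨u m / q ^ m, by positivity, fun n hn_mod hn => ?_⟩
    have hmn : m ≤ n := Nat.find_min' h ⟨hn_mod, hn⟩
    obtain ⟨j, hj⟩ := (Nat.modEq_iff_dvd' hmn).1 (hm_mod.trans hn_mod.symm)
    obtain rfl : n = m + n₀ * j := by lia
    calc u m / q ^ m * q ^ (m + n₀ * j) = u m * (q ^ n₀) ^ j := by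
          rw [pow_add, pow_mul]
          field_simp
      _ ≤ u (m + n₀ * j) := mul_pow_pow_le_of_mul_le_add hu hn₀ m j
  · exact ⟨1, one_pos, fun n hn_mod hn => absurd ⟨n, hn_mod, hn⟩ h⟩

theorem exists_mul_pow_le_of_mul_le_add (hu : ∀ n m, u n * u m ≤ u (n + m)) (hq : 0 < q) {n₀ : ℕ}
    (hn₀_pos : 0 < n₀) (hn₀ : q ^ n₀ ≤ u n₀) :
    ∃ κ > 0, ∀ n, u n ≠ 0 → κ * q ^ n ≤ u n := by
  choose κ κ_pos hκ using exists_mul_pow_le_of_mod_eq hu hq hn₀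
  have nonempty : (Finset.range n₀).Nonempty := Finset.nonempty_range_iff.2 hn₀_pos.ne'
  refine ⟨(Finset.range n₀).inf' nonempty κ, (Finset.lt_inf'_iff _).2 fun i _ => κ_pos i,
    fun n hn => le_trans ?_ (hκ _ n rfl hn)⟩
  gcongr
  exact Finset.inf'_le _ (Finset.mem_range.2 (Nat.mod_lt n hn₀_pos))

theorem exists_pow_le_of_tsum_eq_top
    (hu : ∀ z : ℝ≥0, 1 < z → ∑' n, u n * (z : ℝ≥0∞) ^ n = ⊤) (hq₀ : 0 < q) (hq₁ : q < 1) :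
    ∃ n > 0, q ^ n ≤ u n := by
  by_contra! h
  obtain ⟨z, hz₁, hz⟩ : ∃ z : ℝ≥0, 1 < z ∧ z < q⁻¹ := exists_between ((one_lt_inv₀ hq₀).2 hq₁)
  have hqz : q * z < 1 := by rwa [← one_div, lt_div_iff₀' hq₀] at hz
  have le_geometric (n : ℕ) :
      u n * (z : ℝ≥0∞) ^ n ≤ (1 + u 0 : ℝ≥0) * ((q * z : ℝ≥0) : ℝ≥0∞) ^ n := by
    have : u n ≤ (1 + u 0) * q ^ n := by
      rcases n.eq_zero_or_pos with rfl | hn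
      · simp
      · exact (h n hn).le.trans (le_mul_of_one_le_left zero_le le_self_add)
    rw [ENNReal.coe_mul, mul_pow, ← mul_assoc]
    gcongr
    exact_mod_cast this
  refine absurd (hu z hz₁) ((ENNReal.tsum_le_tsum le_geometric).trans_lt ?_).ne
  rw [ENNReal.tsum_mul_left, ENNReal.tsum_geometric]
  exact ENNReal.mul_lt_top ENNReal.coe_lt_top
    (ENNReal.inv_lt_top.2 (tsub_pos_of_lt (by exact_mod_cast hqz)))

end

namespace PlaneTree

/-- The plane tree obtained from `P` by replacing its leftmost leaf by `Q`. -/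
def graft : PlaneTree → PlaneTree → PlaneTree
  | node 0 _, Q => Q
  | node (k + 1) c, Q => node (k + 1) (Fin.cons ((c 0).graft Q) (Fin.tail c))

theorem node_zero_graft (c : Fin 0 → PlaneTree) (Q : PlaneTree) : (node 0 c).graft Q = Q := by
  rw [graft]

theorem node_succ_graft {k : ℕ} (c : Fin (k + 1) → PlaneTree) (Q : PlaneTree) :
    (node (k + 1) c).graft Q = node (k + 1) (Fin.cons ((c 0).graft Q) (Fin.tail c)) := by
  rw [graft]

theorem size_graft (P Q : PlaneTree) : (P.graft Q).size + 1 = P.size + Q.size := by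
  induction P with
  | node k c ih =>
    obtain _ | k := k
    · simp [node_zero_graft, size_node, add_comm]
    · have := ih 0
      simp only [node_succ_graft, size_node, Fin.sum_univ_succ, Fin.cons_zero, Fin.cons_succ,
        Fin.tail]
      lia

theorem weight_graft {M : Type*} [CommMonoid M] (w : ℕ → M) (P Q : PlaneTree) :
    w 0 * (P.graft Q).weight w = P.weight w * Q.weight w := by
  induction P with
  | node k c ih =>
    obtain _ | k := k
    · simp [node_zero_graft, weight_node]
    · simp only [node_succ_graft, weight_node, Fin.prod_univ_succ, Fin.cons_zero, Fin.cons_succ,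
        Fin.tail]
      rw [mul_left_comm, ← mul_assoc (w 0), ih 0]
      ac_rfl

theorem size_node_zero (c : Fin 0 → PlaneTree) : (node 0 c).size = 1 := by
  rw [size_node, Finset.univ_eq_empty, Finset.sum_empty, add_zero]

theorem graft_injective_of_size_eq {P P' Q Q' : PlaneTree} (h : P.graft Q = P'.graft Q')
    (hQ : Q.size = Q'.size) : P = P' ∧ Q = Q' := by
  induction P generalizing P' with
  | node k c ih =>
    obtain ⟨k', c'⟩ := P'
    have size_eq : (node k c).size = (node k' c').size := by
      have := size_graft (node k c) Q
      have := size_graft (node k' c') Q'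
      rw [h] at *
      lia
    obtain _ | k := k <;> obtain _ | k' := k'
    · rw [node_zero_graft, node_zero_graft] at h
      exact ⟨congrArg _ (Subsingleton.elim c c'), h⟩
    · have := size_lt_size_node c' 0
      have := size_pos (c' 0)
      have := size_node_zero c
      lia
    · have := size_lt_size_node c 0
      have := size_pos (c 0)
      have := size_node_zero c'
      lia
    · rw [node_succ_graft, node_succ_graft] at h
      obtain ⟨hk, hc⟩ := node.inj h
      obtain rfl : k = k' := Nat.succ_injective hk
      obtain ⟨graft_eq, tail_eq⟩ := Fin.cons_inj.1 (eq_of_heq hc)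
      obtain ⟨head_eq, Q_eq⟩ := ih 0 graft_eq
      refine ⟨congrArg _ ?_, Q_eq⟩
      rw [← Fin.cons_self_tail c, ← Fin.cons_self_tail c', head_eq, tail_eq]

theorem sizeMass_zero (w : ℕ → ℝ≥0∞) : sizeMass w 0 = 0 :=
  ENNReal.tsum_eq_zero.2 fun Q => if_neg Q.size_pos.ne'

theorem sizeMass_mul_sizeMass_le (w : ℕ → ℝ≥0∞) (n m : ℕ) :
    sizeMass w (n + 1) * sizeMass w (m + 1) ≤ w 0 * sizeMass w (n + m + 1) := by
  let S : Set (PlaneTree × PlaneTree) := {x | x.1.size = n + 1 ∧ x.2.size = m + 1}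
  have graft_injective : Function.Injective fun x : S => x.1.1.graft x.1.2 := by
    rintro ⟨⟨P, Q⟩, _, hQ⟩ ⟨⟨P', Q'⟩, _, hQ'⟩ h
    obtain ⟨rfl, rfl⟩ := graft_injective_of_size_eq h (hQ.trans hQ'.symm)
    rfl
  calc sizeMass w (n + 1) * sizeMass w (m + 1)
      = ∑' x : PlaneTree × PlaneTree, S.indicator (fun x => x.1.weight w * x.2.weight w) x := by
        rw [sizeMass, ← ENNReal.tsum_mul_right, ENNReal.tsum_prod']
        refine tsum_congr fun P => ?_
        rw [sizeMass, ← ENNReal.tsum_mul_left]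
        refine tsum_congr fun Q => ?_
        simp only [ite_mul, mul_ite, zero_mul, mul_zero, ← ite_and, Set.indicator, S,
          Set.mem_ofPred_eq, and_comm]
    _ = ∑' x : S, w 0 * (x.1.1.graft x.1.2).weight w := by
        rw [← tsum_subtype]
        simp only [weight_graft]
    _ ≤ w 0 * sizeMass w (n + m + 1) := by
        rw [ENNReal.tsum_mul_left]
        gcongr
        refine le_trans (ENNReal.tsum_le_tsum fun ⟨⟨P, Q⟩, hP, hQ⟩ => ?_)
          (ENNReal.tsum_comp_le_tsum_of_injective graft_injective _)
        rw [if_pos]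
        change P.size = n + 1 at hP
        change Q.size = m + 1 at hQ
        have := size_graft P Q
        simp only
        lia

end PlaneTree

namespace IsCritical

open PlaneTree

variable {p : ℕ → ℝ≥0∞}

theorem tsum_sizeMass_succ_mul_pow_eq_top (hp : IsCritical p) {z : ℝ≥0} (hz : 1 < z) :
    ∑' n, sizeMass p (n + 1) * (z : ℝ≥0∞) ^ n = ⊤ := by
  have top := hp.tsum_sizeMass_mul_pow_eq_top hz
  rw [tsum_eq_zero_add' ENNReal.summable, sizeMass_zero, zero_mul, zero_add] at top
  simp only [pow_succ, ← mul_assoc, ENNReal.tsum_mul_right] at top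
  by_contra h
  exact ENNReal.mul_ne_top h ENNReal.coe_ne_top top

theorem exists_mul_pow_le_sizeMass (hp : IsCritical p) {q : ℝ≥0} (hq₀ : 0 < q) (hq₁ : q < 1) :
    ∃ κ : ℝ≥0, 0 < κ ∧ ∀ n, sizeMass p (n + 1) ≠ 0 → κ * q ^ n ≤ sizeMass p (n + 1) := by
  have p₀_ne_top : p 0 ≠ ⊤ := (hp.le_one 0).trans_lt ENNReal.one_lt_top |>.ne
  lift p 0 to ℝ≥0 using p₀_ne_top with p₀ hp₀
  have p₀_ne_zero : p₀ ≠ 0 := fun h => hp.zero_ne_zero (by rw [← hp₀, h, ENNReal.coe_zero])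
  obtain ⟨u, hu⟩ : ∃ u : ℕ → ℝ≥0, ∀ n, sizeMass p (n + 1) = (p₀ * u n : ℝ≥0) :=
    ⟨fun n => (sizeMass p (n + 1)).toNNReal / p₀, fun n => by
      rw [mul_div_cancel₀ _ p₀_ne_zero, ENNReal.coe_toNNReal (hp.sizeMass_ne_top _)]⟩
  have u_mul_le (n m : ℕ) : u n * u m ≤ u (n + m) := by
    have graft_le := sizeMass_mul_sizeMass_le p n m
    rw [hu, hu, hu, ← hp₀] at graft_le
    norm_cast at graft_le
    rw [mul_mul_mul_comm, ← mul_assoc p₀ p₀] at graft_le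
    exact le_of_mul_le_mul_left graft_le (by positivity)
  have u_tsum (z : ℝ≥0) (hz : 1 < z) : ∑' n, u n * (z : ℝ≥0∞) ^ n = ⊤ := by
    have top := hp.tsum_sizeMass_succ_mul_pow_eq_top hz
    simp only [hu, ENNReal.coe_mul, mul_assoc, ENNReal.tsum_mul_left] at top
    by_contra h
    exact ENNReal.mul_ne_top ENNReal.coe_ne_top h top
  obtain ⟨n₀, hn₀_pos, hn₀⟩ := exists_pow_le_of_tsum_eq_top u_tsum hq₀ hq₁
  obtain ⟨κ, hκ₀, hκ⟩ := exists_mul_pow_le_of_mul_le_add u_mul_le hq₀ hn₀_pos hn₀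
  refine ⟨p₀ * κ, by positivity, fun n hn => ?_⟩
  have u_ne_zero : u n ≠ 0 := fun h => hn (by rw [hu, h, mul_zero, ENNReal.coe_zero])
  rw [hu]
  norm_cast
  rw [mul_assoc]
  gcongr
  exact hκ n u_ne_zero

end IsCritical

/-! ### Exponential tilting -/

theorem IsCritical.exists_shapeMass_le_mul_sizeMass {p : ℕ → ℝ≥0∞} (hp : IsCritical p) {Δ : ℕ}
    (hΔ : ∀ k, Δ < k → p k = 0) :
    ∃ C q : ℝ≥0, 0 < q ∧ q < 1 ∧ ∀ X : FinRootedTree, X.shapeMass (PlaneTree.weight p) ≤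
      C * q ^ Fintype.card X.V * PlaneTree.sizeMass p (Fintype.card X.V) := by
  obtain ⟨B, r, hr₀, hr₁, shapeMass_le⟩ := hp.exists_shapeMass_le_mul_pow hΔ
  obtain ⟨q, hq₀, hq₁, hq⟩ := exists_pow_eq_of_lt_one hr₀ hr₁ two_ne_zero
  obtain ⟨κ, hκ₀, le_sizeMass⟩ := hp.exists_mul_pow_le_sizeMass hq₀ hq₁
  refine ⟨B * q / κ, q, hq₀, hq₁, fun X => ?_⟩
  obtain ⟨n, hn⟩ : ∃ n, Fintype.card X.V = n + 1 :=
    Nat.exists_eq_succ_of_ne_zero (@Fintype.card_ne_zero _ _ ⟨X.root⟩)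
  rcases eq_or_ne (PlaneTree.sizeMass p (n + 1)) 0 with h | h
  · refine (FinRootedTree.shapeMass_le_tsum_size _ X).trans ?_
    rw [← PlaneTree.sizeMass, hn, h, mul_zero]
  · calc X.shapeMass (PlaneTree.weight p) ≤ B * r ^ Fintype.card X.V := shapeMass_le X
      _ = (B * q / κ : ℝ≥0) * q ^ (n + 1) * (κ * q ^ n) := by
          rw [hn, ← hq]
          norm_cast
          field_simp
          ring
      _ ≤ (B * q / κ : ℝ≥0) * q ^ Fintype.card X.V * PlaneTree.sizeMass p (Fintype.card X.V) := by
          rw [hn]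
          gcongr
          exact le_sizeMass n h

section

variable {w : ℕ → ℝ≥0} {D : Finset ℕ}

theorem sum_mul_pow_le_sum_natCast_mul_pow {d : ℕ} {x : ℝ≥0} (hd₂ : 2 ≤ d) (hd : d ∈ D)
    (hx : w 0 ≤ w d * x ^ d) :
    ∑ k ∈ D, w k * x ^ k ≤ ∑ k ∈ D, k * (w k * x ^ k) := by
  refine le_of_add_le_add_right (a := w 0) ?_
  have termwise (k : ℕ) : w k * x ^ k + (if k = d then w 0 else 0) ≤
      k * (w k * x ^ k) + (if k = 0 then w 0 else 0) := by
    obtain rfl | hk := eq_or_ne k d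
    · rw [if_pos rfl, if_neg (by lia), add_zero]
      grw [hx, ← two_mul]
      gcongr
      exact_mod_cast hd₂
    obtain rfl | hk₀ := k.eq_zero_or_pos
    · simp [hk]
    · rw [if_neg hk, if_neg hk₀.ne', add_zero, add_zero]
      exact le_mul_of_one_le_left zero_le (by exact_mod_cast hk₀)
  have := Finset.sum_le_sum fun k (_ : k ∈ D) => termwise k
  rw [Finset.sum_add_distrib, Finset.sum_add_distrib, Finset.sum_ite_eq', if_pos hd,
    Finset.sum_ite_eq'] at this
  exact this.trans (by gcongr; split_ifs <;> simp)

theorem exists_sum_natCast_mul_pow_eq (h₀ : w 0 ≠ 0) (h₀D : 0 ∈ D)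
    (h₂ : ∃ d ∈ D, 2 ≤ d ∧ w d ≠ 0) :
    ∃ x : ℝ≥0, x ≠ 0 ∧ ∑ k ∈ D, k * (w k * x ^ k) = ∑ k ∈ D, w k * x ^ k := by
  obtain ⟨d, hd, hd₂, hwd⟩ := h₂
  have le_large : w 0 ≤ w d * (1 + w 0 / w d) ^ d := by
    calc w 0 ≤ w d * (1 + w 0 / w d) := by
          rw [mul_add, mul_div_cancel₀ _ hwd]
          exact le_add_self
      _ ≤ w d * (1 + w 0 / w d) ^ d := by
          gcongr
          exact le_self_pow₀ le_self_add (by lia)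
  have eq_zero_at_zero : ∑ k ∈ D, k * (w k * (0 : ℝ≥0) ^ k) = 0 :=
    Finset.sum_eq_zero fun k _ => by cases k <;> simp
  obtain ⟨x, hx⟩ := intermediate_value_univ₂ (a := (0 : ℝ≥0)) (b := 1 + w 0 / w d)
    (f := fun x => ∑ k ∈ D, k * (w k * x ^ k)) (g := fun x => ∑ k ∈ D, w k * x ^ k)
    (by fun_prop) (by fun_prop) (eq_zero_at_zero.trans_le zero_le)
    (sum_mul_pow_le_sum_natCast_mul_pow hd₂ hd le_large)
  refine ⟨x, ?_, hx⟩
  rintro rfl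
  rw [eq_zero_at_zero, eq_comm, Finset.sum_eq_zero_iff] at hx
  exact h₀ (by simpa using hx 0 h₀D)

theorem exists_isCritical_tilt (hD : ∀ k ∉ D, w k = 0) (h₀ : w 0 ≠ 0)
    (h₂ : ∃ d, 2 ≤ d ∧ w d ≠ 0) :
    ∃ a b : ℝ≥0, a ≠ 0 ∧ b ≠ 0 ∧ IsCritical fun k => a * (b ^ k * w k) := by
  have mem_of_ne_zero {k : ℕ} (hk : w k ≠ 0) : k ∈ D := not_imp_comm.1 (hD k) hk
  obtain ⟨d, hd₂, hd⟩ := h₂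
  obtain ⟨b, hb₀, hb⟩ := exists_sum_natCast_mul_pow_eq h₀ (mem_of_ne_zero h₀)
    ⟨d, mem_of_ne_zero hd, hd₂, hd⟩
  set S := ∑ k ∈ D, w k * b ^ k with hS
  have hS₀ : S ≠ 0 := fun h => h₀ <| by
    simpa using Finset.sum_eq_zero_iff.1 (hS.symm.trans h) 0 (mem_of_ne_zero h₀)
  refine ⟨S⁻¹, b, inv_ne_zero hS₀, hb₀, ?_, ?_, ?_⟩
  · rw [tsum_eq_sum fun k hk => by rw [hD k hk, ENNReal.coe_zero, mul_zero, mul_zero],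
      ← Finset.mul_sum]
    norm_cast
    simp only [mul_comm (b ^ _), ← hS, inv_mul_cancel₀ hS₀]
  · rw [tsum_eq_sum fun k hk => by rw [hD k hk, ENNReal.coe_zero, mul_zero, mul_zero, mul_zero]]
    simp only [mul_left_comm _ ((S⁻¹ : ℝ≥0) : ℝ≥0∞), ← Finset.mul_sum]
    norm_cast
    simp only [mul_comm (b ^ _), hb, inv_mul_cancel₀ hS₀]
  · norm_cast
    positivity

end

namespace PlaneTree

theorem weight_pow_mul {M : Type*} [CommMonoid M] (b : M) (w : ℕ → M) (Q : PlaneTree) :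
    b * Q.weight (fun k => b ^ k * w k) = Q.weight w * b ^ Q.size := by
  induction Q with
  | node k c ih =>
    have children : b ^ k * ∏ i, (c i).weight (fun k => b ^ k * w k) =
        (∏ i, (c i).weight w) * b ^ ∑ i, (c i).size := by
      simp only [← Finset.prod_pow_eq_pow_sum, ← Finset.prod_mul_distrib, ← ih]
      rw [Finset.prod_mul_distrib, Finset.prod_const, Finset.card_univ, Fintype.card_fin]
    rw [weight_node, weight_node, size_node, pow_add, pow_one, mul_assoc (w k),
      mul_left_comm _ b, ← children]
    ac_rfl

theorem weight_tilt {M : Type*} [CommMonoid M] (a b : M) (w : ℕ → M) (Q : PlaneTree) :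
    b * Q.weight (fun k => a * (b ^ k * w k)) = (a * b) ^ Q.size * Q.weight w := by
  rw [weight_mul_left, ← mul_assoc, weight_pow_mul, mul_pow]
  ac_rfl

theorem sizeMass_tilt (a b : ℝ≥0∞) (w : ℕ → ℝ≥0∞) (n : ℕ) :
    b * sizeMass (fun k => a * (b ^ k * w k)) n = (a * b) ^ n * sizeMass w n := by
  rw [sizeMass, sizeMass, ← ENNReal.tsum_mul_left, ← ENNReal.tsum_mul_left]
  refine tsum_congr fun Q => ?_
  split_ifs with h
  · rw [weight_tilt, h]
  · rw [mul_zero, mul_zero]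

end PlaneTree

open PlaneTree in
theorem FinRootedTree.shapeMass_tilt (a b : ℝ≥0∞) (w : ℕ → ℝ≥0∞) (X : FinRootedTree) :
    b * X.shapeMass (weight fun k => a * (b ^ k * w k)) =
      (a * b) ^ Fintype.card X.V * X.shapeMass (weight w) := by
  rw [shapeMass, shapeMass, ← ENNReal.tsum_mul_left, ← ENNReal.tsum_mul_left]
  refine tsum_congr fun Q => ?_
  split_ifs with h
  · rw [weight_tilt, ← card_toRooted, Fintype.card_congr h.some.1.toEquiv]
  · rw [mul_zero, mul_zero]

open PlaneTree in
theorem exists_shapeMass_le_mul_sizeMass {w : ℕ → ℝ≥0} {D : Finset ℕ} (hD : ∀ k ∉ D, w k = 0)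
    (h₀ : w 0 ≠ 0) (h₂ : ∃ d, 2 ≤ d ∧ w d ≠ 0) :
    ∃ C q : ℝ≥0, 0 < q ∧ q < 1 ∧ ∀ X : FinRootedTree, X.shapeMass (weight fun k => w k) ≤
      C * q ^ Fintype.card X.V * sizeMass (fun k => w k) (Fintype.card X.V) := by
  obtain ⟨a, b, ha, hb, critical⟩ := exists_isCritical_tilt hD h₀ h₂
  have bounded (k : ℕ) (hk : D.sup id < k) : (a * (b ^ k * w k) : ℝ≥0∞) = 0 := by
    rw [hD k fun h => hk.not_ge (Finset.le_sup (f := id) h), ENNReal.coe_zero, mul_zero, mul_zero]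
  obtain ⟨C, q, hq₀, hq₁, h⟩ := critical.exists_shapeMass_le_mul_sizeMass bounded
  refine ⟨C, q, hq₀, hq₁, fun X => ?_⟩
  have scale_ne_zero : (a * b : ℝ≥0∞) ^ Fintype.card X.V ≠ 0 := by
    norm_cast
    positivity
  have scale_ne_top : (a * b : ℝ≥0∞) ^ Fintype.card X.V ≠ ⊤ := by
    norm_cast
    exact ENNReal.coe_ne_top
  rw [← ENNReal.mul_le_mul_iff_right scale_ne_zero scale_ne_top, ← FinRootedTree.shapeMass_tilt,
    mul_left_comm, ← sizeMass_tilt, mul_left_comm]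
  gcongr
  exact h X

/-! ### Sums over labeled trees -/

namespace RTree

variable {n : ℕ}

theorem isom_iff_nonempty_iso {T T' : RTree n} :
    T.Isom T' ↔ Nonempty (T'.toRooted.Iso T.toRooted) :=
  ⟨fun ⟨f, hf⟩ => ⟨FinRootedTree.Iso.symm ⟨f, hf⟩⟩, fun ⟨f⟩ => ⟨f.symm.1, f.symm.2⟩⟩

theorem prod_factorial_mul_outdeg (w : ℕ → ℝ≥0∞) (T : RTree n) :
    ∏ v, (T.outdeg v)! * w (T.outdeg v) =
      (∏ v, (T.outdeg v)! : ℕ) * ∏ v, w (T.toRooted.outdeg v) := by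
  simp only [Finset.prod_mul_distrib, Nat.cast_prod, outdeg_toRooted]

theorem sum_prod_factorial_mul_outdeg (w : ℕ → ℝ≥0∞) (n : ℕ) :
    ∑ T : RTree n, ∏ v, (T.outdeg v)! * w (T.outdeg v) = n ! * PlaneTree.sizeMass w n := by
  simp only [prod_factorial_mul_outdeg,
    sum_prod_factorial_outdeg_mul (FinRootedTree.IsoInvariant.prod_outdeg w),
    PlaneTree.prod_outdeg_toRooted, PlaneTree.sizeMass]

theorem sum_isom_prod_factorial_mul_outdeg (w : ℕ → ℝ≥0∞) (T : RTree n) :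
    ∑ T' : RTree n, (if T.Isom T' then ∏ v, (T'.outdeg v)! * w (T'.outdeg v) else 0) =
      n ! * T.toRooted.shapeMass (PlaneTree.weight w) := by
  have invariant : FinRootedTree.IsoInvariant fun X =>
      if Nonempty (X.Iso T.toRooted) then ∏ v, w (X.outdeg v) else 0 := fun X Y f => by
    have : Nonempty (X.Iso T.toRooted) ↔ Nonempty (Y.Iso T.toRooted) :=
      ⟨fun ⟨g⟩ => ⟨f.symm.trans g⟩, fun ⟨g⟩ => ⟨f.trans g⟩⟩
    simp only [this, f.prod_outdeg]
  have size_eq (Q : PlaneTree) (f : Q.toRooted.Iso T.toRooted) : Q.size = n := by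
    rw [← Q.card_toRooted, Fintype.card_congr f.1.toEquiv, Fintype.card_fin]
  calc ∑ T' : RTree n, (if T.Isom T' then ∏ v, (T'.outdeg v)! * w (T'.outdeg v) else 0)
      = ∑ T' : RTree n, (∏ v, (T'.outdeg v)! : ℕ) *
          if Nonempty (T'.toRooted.Iso T.toRooted) then ∏ v, w (T'.toRooted.outdeg v) else 0 := by
        simp only [isom_iff_nonempty_iso, prod_factorial_mul_outdeg, mul_ite, mul_zero]
    _ = n ! * T.toRooted.shapeMass (PlaneTree.weight w) := by
        rw [sum_prod_factorial_outdeg_mul invariant, FinRootedTree.shapeMass]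
        congr 1
        refine tsum_congr fun Q => ?_
        by_cases h : Nonempty (Q.toRooted.Iso T.toRooted)
        · rw [if_pos (size_eq Q h.some), if_pos h, if_pos h, PlaneTree.prod_outdeg_toRooted]
        · rw [if_neg h, if_neg h, ite_self]

theorem exists_sum_isom_prod_factorial_mul_outdeg_le {w : ℕ → ℝ≥0} {D : Finset ℕ}
    (hD : ∀ k ∉ D, w k = 0) (h₀ : w 0 ≠ 0) (h₂ : ∃ d, 2 ≤ d ∧ w d ≠ 0) :
    ∃ C q : ℝ≥0, 0 < q ∧ q < 1 ∧ ∀ n,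
      (∑ p : RTree n × RTree n, if p.1.Isom p.2 then
        (∏ v, (p.1.outdeg v)! * w (p.1.outdeg v)) * ∏ v, (p.2.outdeg v)! * w (p.2.outdeg v)
        else 0) ≤
      C * q ^ n * (∑ T : RTree n, ∏ v, (T.outdeg v)! * w (T.outdeg v)) ^ 2 := by
  obtain ⟨C, q, hq₀, hq₁, shapeMass_le⟩ := exists_shapeMass_le_mul_sizeMass hD h₀ h₂
  refine ⟨C, q, hq₀, hq₁, fun n => ?_⟩
  have class_le (T : RTree n) :
      ∑ T' : RTree n, (if T.Isom T' then ∏ v, (T'.outdeg v)! * w (T'.outdeg v) else 0) ≤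
        C * q ^ n * ∑ T' : RTree n, ∏ v, (T'.outdeg v)! * w (T'.outdeg v) := by
    have class_mass := sum_isom_prod_factorial_mul_outdeg (fun k => w k) T
    have total_mass := sum_prod_factorial_mul_outdeg (fun k => w k) n
    have := mul_le_mul_right (shapeMass_le T.toRooted) (n ! : ℝ≥0∞)
    rw [Fintype.card_fin, mul_left_comm, ← class_mass, ← total_mass] at this
    rw [← ENNReal.coe_le_coe]
    push_cast [apply_ite ENNReal.ofNNReal]
    exact this
  simp only [Fintype.sum_prod_type, ← mul_ite_zero, ← Finset.mul_sum]
  calc _ ≤ ∑ T : RTree n, (∏ v, (T.outdeg v)! * w (T.outdeg v)) *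
        (C * q ^ n * ∑ T' : RTree n, ∏ v, (T'.outdeg v)! * w (T'.outdeg v)) := by
        gcongr with T
        exact class_le T
    _ = _ := by
        rw [← Finset.sum_mul]
        ring

end RTree

/-- For a Galton–Watson-type weighting with finite degree set
`D` (containing `0` and some `d ≥ 2`), the probability that two independent
weight-random trees of size `n` are isomorphic decays exponentially. -/
theorem prob_isom_GW_bounded_degrees_exponential_decay
    (D : Finset ℕ) (hD0 : 0 ∈ D) (hD2 : ∃ d ∈ D, 2 ≤ d)
    (ω : ℕ → ℝ) (hω : ∀ k ∈ D, 0 < ω k) (hω' : ∀ k ∉ D, ω k = 0) :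
    ∃ B c : ℝ, 0 < B ∧ 0 < c ∧ c < 1 ∧
      ∀ n : ℕ, 1 ≤ n →
        (∃ T : RTree n, 0 < ∏ v, ω (T.outdeg v)) →
        (∑ p : RTree n × RTree n,
            if p.1.Isom p.2 then
              (∏ v, ω (p.1.outdeg v)) * (∏ v, ω (p.2.outdeg v))
            else 0) /
          (∑ T : RTree n, ∏ v, ω (T.outdeg v)) ^ 2 ≤ B * c ^ n := by
  obtain ⟨w, hw⟩ : ∃ w : ℕ → ℝ≥0, ∀ k, ω k = k ! * w k := by
    have ω_nonneg (k : ℕ) : 0 ≤ ω k :=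
      if hk : k ∈ D then (hω k hk).le else (hω' k hk).ge
    exact ⟨fun k => ⟨ω k / k !, div_nonneg (ω_nonneg k) (by positivity)⟩,
      fun k => (mul_div_cancel₀ (ω k) (by positivity)).symm⟩
  have w_ne_zero (k : ℕ) (hk : k ∈ D) : w k ≠ 0 := fun h => by simpa [hw, h] using hω k hk
  have w_eq_zero (k : ℕ) (hk : k ∉ D) : w k = 0 := by
    simpa [hw, Nat.factorial_ne_zero] using hω' k hk
  obtain ⟨d, hdD, hd₂⟩ := hD2
  obtain ⟨C, q, hq₀, hq₁, h⟩ := RTree.exists_sum_isom_prod_factorial_mul_outdeg_le w_eq_zero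
    (w_ne_zero 0 hD0) ⟨d, hd₂, w_ne_zero d hdD⟩
  refine ⟨C + 1, q, by positivity, by exact_mod_cast hq₀, by exact_mod_cast hq₁, fun n _ _ => ?_⟩
  simp only [hw]
  refine div_le_of_le_mul₀ (by positivity) (by positivity) ?_
  have pairs_le := (h n).trans (by gcongr; exact le_self_add : _ ≤ (C + 1) * q ^ n * _)
  rw [← NNReal.coe_le_coe] at pairs_le
  push_cast [apply_ite NNReal.toReal] at pairs_le
  exact pairs_le
end

section
/- For each n ≥ 1 consider the probability measure on rooted labeled trees on n vertices in which a tree T is chosen with probability proportional to Ω(T) = ∏_v outdeg(v)! (the product of the factorials of the out-degrees of all vertices), and let q_n = (∑ Ω(T₁)·Ω(T₂), summed over ordered pairs (T₁, T₂) of isomorphic rooted labeled trees on n vertices) / (∑_T Ω(T))² be the probability that two independent samples are isomorphic. Then q_n decays subexponentially: limsup_{n→∞} q_n^{1/n} = 1; equivalently, for every c ∈ (0,1) there are infinitely many n with q_n > c^n. -/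
open scoped Classical BigOperators

/-- The plane-tree weight of a rooted labeled tree: the product of the
factorials of the out-degrees of all vertices. -/
noncomputable def planeWeight {n : ℕ} (T : RTree n) : ℝ :=
  ∏ v, ((T.outdeg v).factorial : ℝ)

/-- The probability that two independent samples from the measure proportional
to `planeWeight` (i.e. two uniformly random plane trees of size `n`) are
isomorphic. -/
noncomputable def probIsomPlane (n : ℕ) : ℝ :=
  (∑ p : RTree n × RTree n,
      if p.1.Isom p.2 then planeWeight p.1 * planeWeight p.2 else 0) /
    (∑ T : RTree n, planeWeight T) ^ 2

/-!
Let `p n` be the number of plane trees with `n` vertices. It is at most exponential in `n`, so the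
supremum `L` of its `n`-th roots is finite, and some `M` has `p M ^ (1 / M)` close to `L`. Trees
with `k` branches of size `M` at the root have `n = k * M + 1` vertices, and there are `p M ^ k` of
them, which is not much less than `L ^ n`, hence than `p n`. The isomorphism class of such a tree
depends only on the multiset of its branches, and there are only polynomially many of these in `k`.
So a single isomorphism class contains a proportion of the plane trees of size `n` that is not
exponentially small, and neither is the square of that proportion, which bounds `q n` from below.
-/

open Finset Filter
open scoped Nat

section Growth

lemma limsup_rpow_inv_eq_one {q : ℕ → ℝ} (hq_nonneg : ∀ n, 0 ≤ q n) (hq_le : ∀ n, q n ≤ 1)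
    (hq : ∀ c : ℝ, 0 < c → c < 1 → {n : ℕ | c ^ n < q n}.Infinite) :
    limsup (fun n : ℕ => q n ^ ((n : ℝ)⁻¹)) atTop = 1 := by
  have root_le (n : ℕ) : q n ^ ((n : ℝ)⁻¹) ≤ 1 :=
    Real.rpow_le_one (hq_nonneg n) (hq_le n) (by positivity)
  have root_nonneg (n : ℕ) : 0 ≤ q n ^ ((n : ℝ)⁻¹) := Real.rpow_nonneg (hq_nonneg n) _
  have bdd_above : IsBoundedUnder (· ≤ ·) atTop fun n : ℕ => q n ^ ((n : ℝ)⁻¹) :=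
    isBoundedUnder_of ⟨1, root_le⟩
  have bdd_below : IsBoundedUnder (· ≥ ·) atTop fun n : ℕ => q n ^ ((n : ℝ)⁻¹) :=
    isBoundedUnder_of ⟨0, root_nonneg⟩
  refine le_antisymm
    (limsup_le_of_le bdd_below.isCoboundedUnder_le (Eventually.of_forall root_le)) ?_
  refine le_of_forall_lt fun b hb => ?_
  obtain ⟨c, hc, hc1⟩ := exists_between (max_lt hb (zero_lt_one' ℝ))
  obtain ⟨hbc, hc0⟩ := max_lt_iff.1 hc
  refine hbc.trans_le (le_limsup_of_frequently_le ?_ bdd_above)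
  have frequently_lt := Nat.frequently_atTop_iff_infinite.2 (hq c hc0 hc1)
  refine (frequently_lt.and_eventually (eventually_ne_atTop 0)).mono fun n ⟨hn, hn0⟩ => ?_
  calc c = (c ^ n) ^ ((n : ℝ)⁻¹) := (Real.pow_rpow_inv_natCast hc0.le hn0).symm
    _ ≤ q n ^ ((n : ℝ)⁻¹) := Real.rpow_le_rpow (by positivity) hn.le (by positivity)

-- The rate is the supremum of `p n ^ (1 / n)` over `n ≠ 0`.
lemma exists_exponential_growth_rate {p : ℕ → ℝ} {C : ℝ} (hp : ∀ n, 0 ≤ p n) (hp_one : 0 < p 1)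
    (hpC : ∀ n, p n ≤ C ^ n) :
    ∃ L > 0, (∀ n ≠ 0, p n ≤ L ^ n) ∧ ∀ x, 0 ≤ x → x < L → ∃ M ≠ 0, x ^ M ≤ p M := by
  have hC : 0 ≤ C := by simpa using (hp 1).trans (hpC 1)
  set S : Set ℝ := (fun n : ℕ => p n ^ ((n : ℝ)⁻¹)) '' {n | n ≠ 0}
  have root_pow {n : ℕ} (hn : n ≠ 0) : (p n ^ ((n : ℝ)⁻¹)) ^ n = p n :=
    Real.rpow_inv_natCast_pow (hp n) hn
  have bdd : BddAbove S := by
    refine ⟨C, ?_⟩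
    rintro _ ⟨n, hn, rfl⟩
    exact le_of_pow_le_pow_left₀ hn hC ((root_pow hn).trans_le (hpC n))
  have one_mem : p 1 ∈ S := ⟨1, one_ne_zero, by simp⟩
  refine ⟨sSup S, hp_one.trans_le (le_csSup bdd one_mem), fun n hn => ?_, fun x hx hxL => ?_⟩
  · rw [← root_pow hn]
    exact pow_le_pow_left₀ (Real.rpow_nonneg (hp n) _) (le_csSup bdd ⟨n, hn, rfl⟩) n
  · obtain ⟨_, ⟨M, hM, rfl⟩, hxM⟩ := exists_lt_of_lt_csSup ⟨_, one_mem⟩ hxL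
    exact ⟨M, hM, (pow_le_pow_left₀ hx hxM.le M).trans_eq (root_pow hM)⟩

lemma eventually_mul_add_one_pow_mul_pow_lt_pow {a b : ℝ} (ha : 0 < a) (hab : a < b) (C : ℝ)
    (d : ℕ) : ∀ᶠ k : ℕ in atTop, C * ((k : ℝ) + 1) ^ d * a ^ k < b ^ k := by
  have hb : 0 < b := ha.trans hab
  have lim : Tendsto (fun k : ℕ => C / (a / b) * ((((k + 1 : ℕ) : ℝ) ^ d * (a / b) ^ (k + 1))))
      atTop (nhds 0) := by
    simpa using ((tendsto_pow_const_mul_const_pow_of_lt_one d (by positivity)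
      ((div_lt_one hb).2 hab)).comp (tendsto_add_atTop_nat 1)).const_mul (C / (a / b))
  filter_upwards [lim.eventually_lt_const one_pos] with k hk
  rw [pow_succ, div_pow] at hk
  push_cast at hk
  field_simp at hk
  exact hk

lemma infinite_setOf_pow_lt_of_sq_le_mul_sq {p q : ℕ → ℝ} {C : ℝ} (hp : ∀ n, 0 ≤ p n)
    (hp_one : 0 < p 1) (hpC : ∀ n, p n ≤ C ^ n)
    (hpq : ∀ M, ∃ N, ∀ k : ℕ,
      (p M ^ k / ((k : ℝ) + 1) ^ N) ^ 2 ≤ q (k * M + 1) * p (k * M + 1) ^ 2)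
    {c : ℝ} (hc0 : 0 < c) (hc1 : c < 1) : {n : ℕ | c ^ n < q n}.Infinite := by
  obtain ⟨L, hL, p_le, le_p⟩ := exists_exponential_growth_rate hp hp_one hpC
  have sqrt_lt : √c * L < L := mul_lt_of_lt_one_left hL ((Real.sqrt_lt' one_pos).2 (by simpa))
  obtain ⟨x, hx, hxL⟩ := exists_between sqrt_lt
  have hx0 : 0 < x := lt_of_le_of_lt (by positivity) hx
  have lt_sq : c * L ^ 2 < x ^ 2 := by
    simpa [mul_pow, Real.sq_sqrt hc0.le] using pow_lt_pow_left₀ hx (by positivity) two_ne_zero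
  obtain ⟨M, hM, le_pM⟩ := le_p x hx0.le hxL
  obtain ⟨N, hN⟩ := hpq M
  have eventually_lt : ∀ᶠ k : ℕ in atTop, c ^ (k * M + 1) < q (k * M + 1) := by
    filter_upwards [eventually_mul_add_one_pow_mul_pow_lt_pow (by positivity)
      (pow_lt_pow_left₀ lt_sq (by positivity) hM) (c * L ^ 2) (N * 2)] with k hk
    by_contra! q_le
    refine hk.not_ge ?_
    calc ((x ^ 2) ^ M) ^ k = ((x ^ M) ^ k / ((k : ℝ) + 1) ^ N) ^ 2 * ((k : ℝ) + 1) ^ (N * 2) := by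
          rw [div_pow, ← pow_mul ((k : ℝ) + 1), div_mul_cancel₀ _ (by positivity)]; ring
      _ ≤ (p M ^ k / ((k : ℝ) + 1) ^ N) ^ 2 * ((k : ℝ) + 1) ^ (N * 2) := by gcongr
      _ ≤ c ^ (k * M + 1) * (L ^ (k * M + 1)) ^ 2 * ((k : ℝ) + 1) ^ (N * 2) := by
          gcongr
          refine (hN k).trans ?_
          have := hp (k * M + 1)
          gcongr
          exact p_le _ (by omega)
      _ = c * L ^ 2 * ((k : ℝ) + 1) ^ (N * 2) * ((c * L ^ 2) ^ M) ^ k := by ring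
  have tendsto_index : Tendsto (fun k => k * M + 1) atTop atTop :=
    StrictMono.tendsto_atTop fun a b hab => by gcongr
  exact Nat.frequently_atTop_iff_infinite.1 (tendsto_index.frequently eventually_lt.frequently)

end Growth

section Fibers

variable {ι α β : Type*} [Fintype ι]

lemma prod_factorial_card_fiber_cons [Fintype β] [DecidableEq β] {m : ℕ} (b : β) (f : Fin m → β) :
    ∏ v, (#{i | (Fin.cons b f : Fin (m + 1) → β) i = v})! =
      (#{i | f i = b} + 1) * ∏ v, (#{i | f i = v})! := by
  have card_fiber (v : β) :
      #{i | (Fin.cons b f : Fin (m + 1) → β) i = v} =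
        (if b = v then 1 else 0) + #{i | f i = v} := by
    rw [Fin.card_filter_univ_succ]
    simp only [Fin.cons_zero, Fin.cons_succ]
    split_ifs <;> omega
  have factorial_card_fiber (v : β) : (#{i | (Fin.cons b f : Fin (m + 1) → β) i = v})! =
      (if b = v then #{i | f i = b} + 1 else 1) * (#{i | f i = v})! := by
    rw [card_fiber]
    split_ifs with h
    · rw [h, add_comm, Nat.factorial_succ]
    · simp
  simp_rw [factorial_card_fiber, prod_mul_distrib, prod_ite_eq, mem_univ, if_true]

-- Each side counts the ways to distribute `m` labelled balls into linearly ordered lists, one for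
-- each `v : β`: the `(m + 1)`-st ball can be inserted in `card β + m` places.
lemma sum_prod_factorial_card_fiber [Fintype β] [DecidableEq β] (m : ℕ) :
    ∑ f : Fin m → β, ∏ v, (#{i | f i = v})! = (Fintype.card β).ascFactorial m := by
  induction m with
  | zero => simp
  | succ m ih =>
    have sum_card_fiber (f : Fin m → β) : ∑ b, (#{i | f i = b} + 1) = Fintype.card β + m := by
      rw [sum_add_distrib, ← card_eq_sum_card_fiberwise (by simp), add_comm]
      simp
    calc ∑ f : Fin (m + 1) → β, ∏ v, (#{i | f i = v})!
        = ∑ f : Fin m → β, ∑ b, (#{i | f i = b} + 1) * ∏ v, (#{i | f i = v})! := by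
          rw [← (Fin.consEquiv fun _ => β).sum_comp, Fintype.sum_prod_type_right]
          simp_rw [← prod_factorial_card_fiber_cons]
          rfl
      _ = (Fintype.card β).ascFactorial (m + 1) := by
          simp_rw [← sum_mul, sum_card_fiber, ← mul_sum, ih, Nat.ascFactorial_succ]

lemma exists_perm_comp_of_card_fiber_eq [DecidableEq α] {f g : ι → α}
    (h : ∀ a, #{i | f i = a} = #{i | g i = a}) : ∃ σ : Equiv.Perm ι, f = g ∘ σ := by
  have fiber_equiv (a : α) : Nonempty ({i // f i = a} ≃ {i // g i = a}) := by
    rw [← Fintype.card_eq, Fintype.card_subtype, Fintype.card_subtype, h]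
  let E (a : α) := (fiber_equiv a).some
  exact ⟨(Equiv.sigmaFiberEquiv f).symm.trans
    ((Equiv.sigmaCongrRight E).trans (Equiv.sigmaFiberEquiv g)),
    funext fun i => (E (f i) ⟨i, rfl⟩).2.symm⟩

-- Pigeonhole on the `α`-indexed vector of fibre sizes, each of which is at most `card ι`.
lemma exists_finset_perm_comp_and_le_sum_prod [Fintype α] (w : α → ℝ) :
    ∃ S : Finset (ι → α), (∀ f ∈ S, ∀ g ∈ S, ∃ σ : Equiv.Perm ι, f = g ∘ σ) ∧
      (∑ a, w a) ^ Fintype.card ι / ((Fintype.card ι : ℝ) + 1) ^ Fintype.card α ≤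
        ∑ f ∈ S, ∏ i, w (f i) := by
  let fiberCard (f : ι → α) (a : α) : Fin (Fintype.card ι + 1) :=
    ⟨#{i | f i = a}, Nat.lt_succ_of_le (card_le_univ _)⟩
  obtain ⟨c, hc⟩ := Fintype.exists_le_sum_fiber_of_nsmul_le_sum fiberCard
    (w := fun f => ∏ i, w (f i))
    (b := (∑ a, w a) ^ Fintype.card ι / ((Fintype.card ι : ℝ) + 1) ^ Fintype.card α) (by
      rw [nsmul_eq_mul, Fintype.card_fun, Fintype.card_fin]
      push_cast
      rw [mul_div_cancel₀ _ (by positivity), ← Fintype.piFinset_univ, ← prod_univ_sum, prod_const,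
        card_univ])
  refine ⟨({f | fiberCard f = c} : Finset (ι → α)), fun f hf g hg => ?_, hc⟩
  refine exists_perm_comp_of_card_fiber_eq fun a => ?_
  rw [mem_filter_univ] at hf hg
  exact congrArg Fin.val (congrFun (hf.trans hg.symm) a)

end Fibers

section TreeParent

variable {V : Type*} {G : SimpleGraph V} (hG : G.IsTree) (r : V)

/-- The parent of `v` in a tree rooted at `r`, that is, the second vertex of the path from `v` to
`r`. The root is its own parent. -/
noncomputable def treeParent (v : V) : V :=
  (hG.existsUnique_path v r).choose.snd

variable {r}

lemma treeParent_eq_snd {v : V} {p : G.Walk v r} (hp : p.IsPath) : treeParent hG r v = p.snd := by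
  rw [(hG.existsUnique_path v r).choose_spec.2 p hp, treeParent]

lemma treeParent_self : treeParent hG r r = r :=
  treeParent_eq_snd hG SimpleGraph.Walk.IsPath.nil

lemma adj_treeParent {v : V} (hv : v ≠ r) : G.Adj v (treeParent hG r v) :=
  SimpleGraph.Walk.adj_snd (SimpleGraph.Walk.not_nil_of_ne hv)

lemma treeParent_eq_or_treeParent_eq_of_adj {u v : V} (h : G.Adj u v) :
    treeParent hG r u = v ∨ treeParent hG r v = u := by
  obtain ⟨p, hp, -⟩ := hG.existsUnique_path u r
  obtain ⟨q, hq, -⟩ := hG.existsUnique_path v r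
  rw [treeParent_eq_snd hG hp, treeParent_eq_snd hG hq]
  by_cases hv : v ∈ p.support
  · exact .inl (hG.isAcyclic.eq_snd_of_adj_start hp h hv).symm
  · have hu : u ∈ q.reverse.support :=
      hG.isAcyclic.mem_support_of_ne_mem_support_of_adj_of_isPath hq.reverse hp.reverse h.symm
        (by simpa using hv)
    exact .inr (hG.isAcyclic.eq_snd_of_adj_start hq h.symm (by simpa using hu)).symm

lemma adj_iff_treeParent {u v : V} :
    G.Adj u v ↔ u ≠ v ∧ (treeParent hG r u = v ∨ treeParent hG r v = u) := by
  have adj_of_eq {u v : V} (hne : u ≠ v) (h : treeParent hG r u = v) : G.Adj u v := by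
    subst h
    exact adj_treeParent hG fun hu => hne (by rw [hu, treeParent_self])
  refine ⟨fun h => ⟨h.ne, treeParent_eq_or_treeParent_eq_of_adj hG h⟩, ?_⟩
  rintro ⟨hne, h | h⟩
  exacts [adj_of_eq hne h, (adj_of_eq hne.symm h).symm]

lemma neighborSet_subset_insert_treeParent (v : V) :
    G.neighborSet v ⊆ insert (treeParent hG r v) {u | treeParent hG r u = v} := fun _ hu =>
  (treeParent_eq_or_treeParent_eq_of_adj hG hu).imp_left Eq.symm

lemma neighborSet_root_subset : G.neighborSet r ⊆ {u | treeParent hG r u = r} := fun _ hu =>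
  (treeParent_eq_or_treeParent_eq_of_adj hG hu).resolve_left fun h =>
    hu.ne (h ▸ (treeParent_self hG).symm)

end TreeParent

section PlaneTreeCount

lemma planeWeight_pos {n : ℕ} (T : RTree n) : 0 < planeWeight T :=
  prod_pos fun _ _ => mod_cast Nat.factorial_pos _

/-- The number of plane trees with `n` vertices. It is encoded through labelled trees: a rooted tree
`T` has `planeWeight T` plane embeddings, and the `n !` labellings of a plane tree are pairwise
distinct because a plane tree has no nontrivial automorphism. -/
noncomputable def planeTreeCount (n : ℕ) : ℝ :=
  (∑ T : RTree n, planeWeight T) / n !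

lemma planeTreeCount_nonneg (n : ℕ) : 0 ≤ planeTreeCount n :=
  div_nonneg (sum_nonneg fun T _ => (planeWeight_pos T).le) (Nat.cast_nonneg _)

lemma planeTreeCount_pos {n : ℕ} (hn : n ≠ 0) : 0 < planeTreeCount n := by
  have : NeZero n := ⟨hn⟩
  obtain ⟨G, -, hG⟩ := (SimpleGraph.connected_top (V := Fin n)).exists_isTree_le
  exact div_pos (sum_pos (fun T _ => planeWeight_pos T) ⟨⟨G, hG, 0⟩, mem_univ _⟩)
    (mod_cast Nat.factorial_pos n)

namespace RTree

variable {n : ℕ}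

lemma ext_graph_root {T T' : RTree n} (hgraph : T.graph = T'.graph) (hroot : T.root = T'.root) :
    T = T' := by
  cases T; cases T'; simp_all

/-- The parent function of a rooted labeled tree, with the root as its own parent. -/
noncomputable def parent (T : RTree n) : Fin n → Fin n :=
  treeParent T.isTree T.root

lemma root_parent_injective : Function.Injective fun T : RTree n => (T.root, T.parent) := by
  intro T T' h
  obtain ⟨hroot, hparent⟩ := Prod.mk.inj h
  refine ext_graph_root ?_ hroot
  ext u v
  rw [adj_iff_treeParent T.isTree (r := T.root), adj_iff_treeParent T'.isTree (r := T'.root)]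
  change _ ∧ (T.parent u = v ∨ T.parent v = u) ↔ _ ∧ (T'.parent u = v ∨ T'.parent v = u)
  rw [hparent]

lemma outdeg_le_card_parent_fiber (T : RTree n) (v : Fin n) :
    T.outdeg v ≤ #{u | T.parent u = v} := by
  have card_fiber : #{u | T.parent u = v} = {u | T.parent u = v}.ncard := by
    rw [Set.ncard_eq_toFinset_card', Set.toFinset_ofPred]
  rw [card_fiber, outdeg]
  split_ifs with hv
  · subst hv
    exact Set.ncard_le_ncard (neighborSet_root_subset T.isTree)
  · rw [tsub_le_iff_right]
    exact (Set.ncard_le_ncard (neighborSet_subset_insert_treeParent T.isTree v)).trans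
      (Set.ncard_insert_le _ _)

end RTree

lemma planeWeight_le_prod_factorial_card_parent_fiber {n : ℕ} (T : RTree n) :
    planeWeight T ≤ (∏ v, (#{u | T.parent u = v})! : ℕ) := by
  rw [planeWeight, ← Nat.cast_prod]
  exact_mod_cast prod_le_prod' fun v _ => Nat.factorial_le (T.outdeg_le_card_parent_fiber v)

lemma sum_planeWeight_le (n : ℕ) :
    ∑ T : RTree n, planeWeight T ≤ (n * n.ascFactorial n : ℕ) := by
  let fiberWeight (p : Fin n × (Fin n → Fin n)) : ℕ := ∏ v, (#{u | p.2 u = v})!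
  calc ∑ T : RTree n, planeWeight T
      ≤ ∑ T : RTree n, (fiberWeight (T.root, T.parent) : ℝ) :=
        sum_le_sum fun T _ => planeWeight_le_prod_factorial_card_parent_fiber T
    _ = ∑ p ∈ univ.image fun T : RTree n => (T.root, T.parent), (fiberWeight p : ℝ) :=
        (sum_image (f := fun p => (fiberWeight p : ℝ)) RTree.root_parent_injective.injOn).symm
    _ ≤ ∑ p, (fiberWeight p : ℝ) :=
        sum_le_sum_of_subset_of_nonneg (subset_univ _) fun _ _ _ => Nat.cast_nonneg _
    _ = (n * n.ascFactorial n : ℕ) := by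
        rw [← Nat.cast_sum, Fintype.sum_prod_type]
        simp [fiberWeight, sum_prod_factorial_card_fiber]

lemma planeTreeCount_le_pow (n : ℕ) : planeTreeCount n ≤ 8 ^ n := by
  rw [planeTreeCount, div_le_iff₀ (mod_cast Nat.factorial_pos n)]
  refine (sum_planeWeight_le n).trans ?_
  have choose_le : (n + n - 1).choose n ≤ 4 ^ n :=
    calc (n + n - 1).choose n ≤ 2 ^ (n + n - 1) := Nat.choose_le_two_pow _ _
      _ ≤ 2 ^ (2 * n) := Nat.pow_le_pow_right two_pos (by omega)
      _ = 4 ^ n := by rw [pow_mul]; norm_num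
  have bound : n * n.ascFactorial n ≤ 8 ^ n * n ! :=
    calc n * n.ascFactorial n = n * (n ! * (n + n - 1).choose n) := by
          rw [Nat.ascFactorial_eq_factorial_mul_choose']
      _ ≤ 2 ^ n * (n ! * 4 ^ n) := by gcongr; exact Nat.lt_two_pow_self.le
      _ = 8 ^ n * n ! := by rw [show 8 = 2 * 4 from rfl, mul_pow]; ring
  exact_mod_cast bound

end PlaneTreeCount

section RootJoin

variable {ι V : Type*}

/-- The disjoint union of the graphs `G i`, rooted at `r i`, together with a new vertex `none`
adjacent to all the roots. All `G i` share the vertex type `V`, so that `ι × V` is the vertex type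
of the disjoint union. -/
def rootJoin (G : ι → SimpleGraph V) (r : ι → V) : SimpleGraph (Option (ι × V)) where
  Adj
    | none, none => False
    | none, some (i, a) => a = r i
    | some (i, a), none => a = r i
    | some (i, a), some (j, b) => i = j ∧ (G i).Adj a b
  symm := ⟨by
    rintro (_ | ⟨i, a⟩) (_ | ⟨j, b⟩) h
    · exact h
    · exact h
    · exact h
    · obtain ⟨rfl, h⟩ := h
      exact ⟨rfl, h.symm⟩⟩
  loopless := ⟨by
    rintro (_ | ⟨i, a⟩) h
    · exact h
    · exact h.2.ne rfl⟩

variable {G G' : ι → SimpleGraph V} {r r' : ι → V} {i j : ι} {a b : V}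

@[simp]
lemma rootJoin_adj_none_some : (rootJoin G r).Adj none (some (i, a)) ↔ a = r i := Iff.rfl

@[simp]
lemma rootJoin_adj_some_none : (rootJoin G r).Adj (some (i, a)) none ↔ a = r i := Iff.rfl

@[simp]
lemma rootJoin_adj_some_some :
    (rootJoin G r).Adj (some (i, a)) (some (j, b)) ↔ i = j ∧ (G i).Adj a b := Iff.rfl

lemma rootJoin_connected (hG : ∀ i, (G i).Preconnected) : (rootJoin G r).Connected := by
  have reachable_none (x : Option (ι × V)) : (rootJoin G r).Reachable none x := by
    rcases x with _ | ⟨i, a⟩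
    · rfl
    · let block : G i →g rootJoin G r := ⟨fun a => some (i, a), fun h => ⟨rfl, h⟩⟩
      have adj_root : (rootJoin G r).Adj none (block (r i)) := rootJoin_adj_none_some.2 rfl
      exact adj_root.reachable.trans ((hG i (r i) a).map block)
  exact ⟨fun x y => (reachable_none x).symm.trans (reachable_none y)⟩

lemma card_edgeSet_rootJoin_le [Fintype ι] [Finite V] :
    Nat.card (rootJoin G r).edgeSet ≤ ∑ i, (Nat.card (G i).edgeSet + 1) := by
  let edge : (Σ i, Option (G i).edgeSet) → Sym2 (Option (ι × V))
    | ⟨i, none⟩ => s(none, some (i, r i))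
    | ⟨i, some e⟩ => e.1.map fun a => some (i, a)
  have edgeSet_subset : (rootJoin G r).edgeSet ⊆ Set.range edge := by
    intro e he
    induction e using Sym2.ind with
    | _ x y =>
      rcases x with _ | ⟨i, a⟩ <;> rcases y with _ | ⟨j, b⟩
      · exact he.elim
      · obtain rfl : b = r j := he
        exact ⟨⟨j, none⟩, rfl⟩
      · obtain rfl : a = r i := he
        exact ⟨⟨i, none⟩, Sym2.eq_swap⟩
      · obtain ⟨rfl, hab⟩ := he
        exact ⟨⟨i, some ⟨s(a, b), hab⟩⟩, rfl⟩
  calc Nat.card (rootJoin G r).edgeSet ≤ Nat.card (Set.range edge) :=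
        Nat.card_mono (Set.toFinite _) edgeSet_subset
    _ ≤ Nat.card (Σ i, Option (G i).edgeSet) := Finite.card_range_le edge
    _ = ∑ i, (Nat.card (G i).edgeSet + 1) := by simp only [Nat.card_sigma, Finite.card_option]

lemma rootJoin_isTree [Finite ι] [Finite V] (hG : ∀ i, (G i).IsTree) : (rootJoin G r).IsTree := by
  have := Fintype.ofFinite ι
  have connected : (rootJoin G r).Connected :=
    rootJoin_connected fun i => (hG i).connected.preconnected
  have card_edges (i : ι) : Nat.card (G i).edgeSet + 1 = Nat.card V :=
    (SimpleGraph.isTree_iff_connected_and_card.1 (hG i)).2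
  refine SimpleGraph.isTree_iff_connected_and_card.2
    ⟨connected, le_antisymm ?_ connected.card_vert_le_card_edgeSet_add_one⟩
  calc Nat.card (rootJoin G r).edgeSet + 1 ≤ ∑ i, (Nat.card (G i).edgeSet + 1) + 1 := by
        gcongr
        exact card_edgeSet_rootJoin_le
    _ = Nat.card (Option (ι × V)) := by
        rw [sum_congr rfl fun i _ => card_edges i]
        simp [Finite.card_option]

lemma ncard_neighborSet_rootJoin_none :
    ((rootJoin G r).neighborSet none).ncard = Nat.card ι := by
  have neighborSet_eq : (rootJoin G r).neighborSet none = Set.range fun i => some (i, r i) := by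
    ext (_ | ⟨i, a⟩)
    · simp
    · simp [eq_comm]
  rw [neighborSet_eq, Set.ncard_range_of_injective]
  exact fun i j h => congrArg Prod.fst (Option.some.inj h)

lemma ncard_neighborSet_rootJoin_some [Finite V] (i : ι) (a : V) :
    ((rootJoin G r).neighborSet (some (i, a))).ncard =
      ((G i).neighborSet a).ncard + if a = r i then 1 else 0 := by
  have block_injective : Function.Injective fun b : V => some (i, b) := fun b c h =>
    congrArg Prod.snd (Option.some.inj h)
  rw [← Set.ncard_image_of_injective _ block_injective]
  split_ifs with ha
  · rw [← Set.ncard_insert_of_notMem (a := none) (by simp) (Set.toFinite _)]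
    congr 1
    ext (_ | ⟨j, b⟩) <;> simp [ha, and_comm]
  · congr 1
    ext (_ | ⟨j, b⟩) <;> simp [ha, and_comm]

lemma exists_forall_iso_rootJoin_some_eq (hG : ∀ i, (G i).Preconnected)
    (π : rootJoin G r ≃g rootJoin G' r') (hπ : π none = none) (i : ι) :
    ∃ j, ∀ a, ∃ b, π (some (i, a)) = some (j, b) := by
  have image_some (a : V) : ∃ j b, π (some (i, a)) = some (j, b) := by
    rcases hx : π (some (i, a)) with _ | ⟨j, b⟩
    · exact absurd (π.injective (hx.trans hπ.symm)) (by simp)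
    · exact ⟨j, b, rfl⟩
  choose block vertex hπ_some using image_some
  have block_eq_of_adj {a b : V} (hab : (G i).Adj a b) : block a = block b := by
    have h := π.map_adj_iff.2 (rootJoin_adj_some_some (r := r).2 ⟨rfl, hab⟩)
    rw [hπ_some, hπ_some] at h
    exact h.1
  have block_eq_of_reachable {a b : V} (hab : (G i).Reachable a b) : block a = block b := by
    obtain ⟨p⟩ := hab
    induction p with
    | nil => rfl
    | cons h _ ih => exact (block_eq_of_adj h).trans ih
  exact ⟨block (r i), fun a => ⟨vertex a, by rw [hπ_some, block_eq_of_reachable (hG i (r i) a)]⟩⟩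

lemma exists_iso_rootJoin_eq_optionCongr_prodShear [Finite ι] [Finite V]
    (hG : ∀ i, (G i).Preconnected) (hG' : ∀ i, (G' i).Preconnected)
    (π : rootJoin G r ≃g rootJoin G' r') (hπ : π none = none) :
    ∃ (ρ : Equiv.Perm ι) (τ : ι → Equiv.Perm V),
      π.toEquiv = Equiv.optionCongr (Equiv.prodShear ρ τ) := by
  choose ρ τ hρτ using exists_forall_iso_rootJoin_some_eq hG π hπ
  choose ρ' τ' hρτ' using exists_forall_iso_rootJoin_some_eq hG' π.symm (π.symm_apply_eq.2 hπ.symm)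
  have ρ_leftInverse : Function.LeftInverse ρ' ρ := fun i => by
    have h := hρτ' (ρ i) (τ i (r i))
    rw [← hρτ, π.symm_apply_apply] at h
    exact (congrArg Prod.fst (Option.some.inj h)).symm
  have τ_injective (i : ι) : Function.Injective (τ i) := fun a b hab => by
    have h : π (some (i, a)) = π (some (i, b)) := by rw [hρτ, hρτ, hab]
    exact congrArg Prod.snd (Option.some.inj (π.injective h))
  refine ⟨Equiv.ofBijective ρ (Finite.injective_iff_bijective.1 ρ_leftInverse.injective),
    fun i => Equiv.ofBijective (τ i) (Finite.injective_iff_bijective.1 (τ_injective i)), ?_⟩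
  ext1 (_ | ⟨i, a⟩)
  exacts [hπ, hρτ i a]

/-- Isomorphisms between the summands, matched up by a permutation and respecting the roots, combine
to an isomorphism between the root joins. -/
def rootJoinIso (σ : Equiv.Perm ι) (f : ∀ i, G i ≃g G' (σ i)) (hf : ∀ i, f i (r i) = r' (σ i)) :
    rootJoin G r ≃g rootJoin G' r' where
  toEquiv := Equiv.optionCongr (Equiv.prodShear σ fun i => (f i).toEquiv)
  map_rel_iff' := by
    rintro (_ | ⟨i, a⟩) (_ | ⟨j, b⟩)
    · exact Iff.rfl
    · simp [← hf]
    · simp [← hf]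
    · by_cases hij : i = j
      · subst hij
        simpa using (f i).map_adj_iff
      · simp [hij]

end RootJoin

section Graft

variable {ι : Type*} {m n : ℕ}

namespace RTree

/-- The rooted tree on `n` vertices whose branches at the root are the trees `T i`; the bijection
`e` labels the new root `none` and the vertices `some (i, a)` of the branches. -/
def graft [Finite ι] (T : ι → RTree m) (e : Option (ι × Fin m) ≃ Fin n) : RTree n where
  graph := (rootJoin (fun i => (T i).graph) fun i => (T i).root).comap e.symm
  isTree := (SimpleGraph.Iso.comap e.symm _).isTree_iff.2 (rootJoin_isTree fun i => (T i).isTree)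
  root := e none

/-- The labelling `e`, as an isomorphism onto the grafted tree. -/
def graftIso [Finite ι] (T : ι → RTree m) (e : Option (ι × Fin m) ≃ Fin n) :
    rootJoin (fun i => (T i).graph) (fun i => (T i).root) ≃g (graft T e).graph :=
  (SimpleGraph.Iso.comap e.symm _).symm

section Finite

variable [Finite ι] {T T' : ι → RTree m} {e e' : Option (ι × Fin m) ≃ Fin n}

lemma ncard_neighborSet_graft (x : Option (ι × Fin m)) :
    ((graft T e).graph.neighborSet (e x)).ncard =
      ((rootJoin (fun i => (T i).graph) fun i => (T i).root).neighborSet x).ncard :=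
  Nat.card_congr ((graftIso T e).mapNeighborSet x).symm

lemma outdeg_graft_root : (graft T e).outdeg (e none) = Nat.card ι := by
  have eq_root : e none = (graft T e).root := rfl
  rw [outdeg, if_pos eq_root, ncard_neighborSet_graft, ncard_neighborSet_rootJoin_none]

lemma outdeg_graft_some (i : ι) (a : Fin m) :
    (graft T e).outdeg (e (some (i, a))) = (T i).outdeg a := by
  have ne_root : e (some (i, a)) ≠ (graft T e).root := e.injective.ne (by simp)
  rw [outdeg, if_neg ne_root, ncard_neighborSet_graft, ncard_neighborSet_rootJoin_some, outdeg]
  split_ifs <;> simp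

lemma Isom.graft (σ : Equiv.Perm ι) (h : ∀ i, (T i).Isom (T' (σ i))) :
    (graft T e).Isom (graft T' e') := by
  choose f hf using h
  let join : rootJoin (fun i => (T i).graph) (fun i => (T i).root) ≃g
      rootJoin (fun i => (T' i).graph) fun i => (T' i).root := rootJoinIso σ f hf
  refine ⟨(graftIso T e).symm.trans (join.trans (graftIso T' e')), ?_⟩
  change e' (join (e.symm (e none))) = e' none
  rw [e.symm_apply_apply]
  rfl

lemma graft_left_injective (e : Option (ι × Fin m) ≃ Fin n) :
    Function.Injective fun T : ι → RTree m => graft T e := by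
  intro T T' h
  have adj_iff (x y : Option (ι × Fin m)) :
      (rootJoin (fun i => (T i).graph) fun i => (T i).root).Adj x y ↔
        (rootJoin (fun i => (T' i).graph) fun i => (T' i).root).Adj x y := by
    rw [← (graftIso T e).map_adj_iff, ← (graftIso T' e).map_adj_iff]
    exact iff_of_eq (congrArg (fun X : RTree n => X.graph.Adj (e x) (e y)) h)
  funext i
  refine ext_graph_root ?_ ?_
  · ext a b
    simpa using adj_iff (some (i, a)) (some (i, b))
  · simpa using adj_iff none (some (i, (T i).root))

lemma exists_eq_trans_of_graft_eq (h : graft T e = graft T' e') :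
    ∃ (ρ : Equiv.Perm ι) (τ : ι → Equiv.Perm (Fin m)),
      e = (Equiv.optionCongr (Equiv.prodShear ρ τ)).trans e' := by
  let graphIso : (graft T e).graph ≃g (graft T' e').graph :=
    ⟨Equiv.refl _, fun {x y} => iff_of_eq (congrArg (fun X : RTree n => X.graph.Adj x y) h.symm)⟩
  let π := (graftIso T e).trans (graphIso.trans (graftIso T' e').symm)
  have π_none : π none = none := by
    change e'.symm (e none) = none
    rw [e'.symm_apply_eq]
    exact congrArg root h
  obtain ⟨ρ, τ, hπ⟩ := exists_iso_rootJoin_eq_optionCongr_prodShear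
    (fun i => (T i).isTree.connected.preconnected) (fun i => (T' i).isTree.connected.preconnected)
    π π_none
  refine ⟨ρ, τ, ?_⟩
  rw [← hπ]
  ext1 x
  exact (e'.apply_symm_apply (e x)).symm

end Finite

variable [Fintype ι] [DecidableEq ι]

lemma card_graft_fiber_le (X : RTree n) :
    #{p : (ι → RTree m) × (Option (ι × Fin m) ≃ Fin n) | graft p.1 p.2 = X} ≤
      (Fintype.card ι)! * m ! ^ Fintype.card ι := by
  rcases eq_empty_or_nonempty
    {p : (ι → RTree m) × (Option (ι × Fin m) ≃ Fin n) | graft p.1 p.2 = X} with h | ⟨⟨T₀, e₀⟩, h₀⟩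
  · simp [h]
  rw [mem_filter_univ] at h₀
  let shearLabels (q : Equiv.Perm ι × (ι → Equiv.Perm (Fin m))) : Option (ι × Fin m) ≃ Fin n :=
    (Equiv.optionCongr (Equiv.prodShear q.1 q.2)).trans e₀
  calc #{p : (ι → RTree m) × (Option (ι × Fin m) ≃ Fin n) | graft p.1 p.2 = X}
      ≤ #(univ.image shearLabels) := by
        refine card_le_card_of_injOn Prod.snd (fun p hp => ?_) ?_
        · rw [mem_coe, mem_filter_univ] at hp
          obtain ⟨ρ, τ, he⟩ := exists_eq_trans_of_graft_eq (hp.trans h₀.symm)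
          exact mem_image.2 ⟨(ρ, τ), mem_univ _, he.symm⟩
        · rintro ⟨T, e⟩ hT ⟨T', e'⟩ hT' he
          obtain rfl : e = e' := he
          rw [mem_coe, mem_filter_univ] at hT hT'
          exact Prod.ext (graft_left_injective e (hT.trans hT'.symm)) rfl
    _ ≤ Fintype.card (Equiv.Perm ι × (ι → Equiv.Perm (Fin m))) := card_image_le
    _ = (Fintype.card ι)! * m ! ^ Fintype.card ι := by simp [Fintype.card_perm]

end RTree

open RTree

variable [Fintype ι]

lemma planeWeight_graft (T : ι → RTree m) (e : Option (ι × Fin m) ≃ Fin n) :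
    planeWeight (graft T e) = (Fintype.card ι)! * ∏ i, planeWeight (T i) := by
  simp_rw [planeWeight, ← e.prod_comp, Fintype.prod_option, Fintype.prod_prod_type,
    outdeg_graft_root, outdeg_graft_some, Nat.card_eq_fintype_card]

/-- The trees on `n` vertices obtained by grafting some family of branches in `S`. -/
noncomputable def grafts (n : ℕ) (S : Finset (ι → RTree m)) : Finset (RTree n) :=
  image₂ graft S univ

lemma factorial_mul_sum_prod_planeWeight_le (hn : n = Fintype.card ι * m + 1)
    (S : Finset (ι → RTree m)) :
    n ! * ∑ T ∈ S, ∏ i, planeWeight (T i) ≤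
      (m ! : ℝ) ^ Fintype.card ι * ∑ X ∈ grafts n S, planeWeight X := by
  have card_labellings : Fintype.card (Option (ι × Fin m) ≃ Fin n) = n ! := by
    rw [Fintype.card_equiv (Fintype.equivFinOfCardEq (by simp [hn]))]
    simp [hn]
  refine le_of_mul_le_mul_left ?_ (Nat.cast_pos.2 (Nat.factorial_pos (Fintype.card ι)))
  calc ((Fintype.card ι)! : ℝ) * (n ! * ∑ T ∈ S, ∏ i, planeWeight (T i))
      = ∑ p ∈ S ×ˢ (univ : Finset (Option (ι × Fin m) ≃ Fin n)), planeWeight (graft p.1 p.2) := by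
        simp_rw [sum_product, planeWeight_graft, sum_const, card_univ, card_labellings,
          nsmul_eq_mul, ← mul_sum]
        ring
    _ = ∑ X ∈ grafts n S,
          #{p ∈ S ×ˢ (univ : Finset (Option (ι × Fin m) ≃ Fin n)) | graft p.1 p.2 = X} •
            planeWeight X :=
        sum_comp planeWeight _
    _ ≤ ∑ X ∈ grafts n S, ((Fintype.card ι)! * m ! ^ Fintype.card ι) • planeWeight X := by
        gcongr with X
        · exact (planeWeight_pos X).le
        · have fiber_subset := filter_subset_filter
            (fun p : (ι → RTree m) × (Option (ι × Fin m) ≃ Fin n) => graft p.1 p.2 = X)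
            (subset_univ (S ×ˢ univ))
          exact (card_le_card fiber_subset).trans (card_graft_fiber_le X)
    _ = (Fintype.card ι)! * ((m ! : ℝ) ^ Fintype.card ι * ∑ X ∈ grafts n S, planeWeight X) := by
        rw [← smul_sum, nsmul_eq_mul]
        push_cast
        ring

lemma isom_of_mem_grafts {S : Finset (ι → RTree m)}
    (hS : ∀ T ∈ S, ∀ T' ∈ S, ∃ σ : Equiv.Perm ι, T = T' ∘ σ) {X Y : RTree n}
    (hX : X ∈ grafts n S) (hY : Y ∈ grafts n S) : X.Isom Y := by
  obtain ⟨T, hT, e, -, rfl⟩ := mem_image₂.1 hX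
  obtain ⟨T', hT', e', -, rfl⟩ := mem_image₂.1 hY
  obtain ⟨σ, rfl⟩ := hS T hT T' hT'
  exact Isom.graft σ fun i => ⟨SimpleGraph.Iso.refl, rfl⟩

end Graft

section ProbIsomPlane

variable {n : ℕ}

lemma probIsomPlane_summand_nonneg (p : RTree n × RTree n) :
    0 ≤ if p.1.Isom p.2 then planeWeight p.1 * planeWeight p.2 else 0 := by
  have := mul_pos (planeWeight_pos p.1) (planeWeight_pos p.2)
  split_ifs <;> positivity

lemma probIsomPlane_nonneg (n : ℕ) : 0 ≤ probIsomPlane n :=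
  div_nonneg (sum_nonneg fun p _ => probIsomPlane_summand_nonneg p) (sq_nonneg _)

lemma probIsomPlane_le_one (n : ℕ) : probIsomPlane n ≤ 1 := by
  refine div_le_one_of_le₀ ?_ (sq_nonneg _)
  rw [sq, sum_mul_sum, ← sum_product', univ_product_univ]
  refine sum_le_sum fun p _ => ?_
  have := mul_pos (planeWeight_pos p.1) (planeWeight_pos p.2)
  split_ifs
  exacts [le_rfl, this.le]

lemma sq_sum_planeWeight_le (hn : n ≠ 0) {P : Finset (RTree n)}
    (hP : ∀ X ∈ P, ∀ Y ∈ P, X.Isom Y) :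
    ((∑ X ∈ P, planeWeight X) / n !) ^ 2 ≤ probIsomPlane n * planeTreeCount n ^ 2 := by
  have sum_pos : (0 : ℝ) < ∑ T : RTree n, planeWeight T := by
    have h := planeTreeCount_pos hn
    rwa [planeTreeCount, div_pos_iff_of_pos_right (mod_cast Nat.factorial_pos n)] at h
  rw [probIsomPlane, planeTreeCount, div_pow, div_pow, ← mul_div_assoc,
    div_mul_cancel₀ _ (by positivity)]
  gcongr
  calc (∑ X ∈ P, planeWeight X) ^ 2
      = ∑ p ∈ P ×ˢ P, if p.1.Isom p.2 then planeWeight p.1 * planeWeight p.2 else 0 := by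
        rw [sq, sum_mul_sum, ← sum_product']
        refine sum_congr rfl fun p hp => (if_pos ?_).symm
        exact hP _ (mem_product.1 hp).1 _ (mem_product.1 hp).2
    _ ≤ ∑ p : RTree n × RTree n,
          if p.1.Isom p.2 then planeWeight p.1 * planeWeight p.2 else 0 :=
        sum_le_sum_of_subset_of_nonneg (subset_univ _) fun p _ _ => probIsomPlane_summand_nonneg p

lemma sq_planeTreeCount_pow_div_le (m k : ℕ) :
    (planeTreeCount m ^ k / ((k : ℝ) + 1) ^ Fintype.card (RTree m)) ^ 2 ≤
      probIsomPlane (k * m + 1) * planeTreeCount (k * m + 1) ^ 2 := by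
  obtain ⟨S, hS, le_sum⟩ :=
    exists_finset_perm_comp_and_le_sum_prod (ι := Fin k) (planeWeight (n := m))
  have sum_le := factorial_mul_sum_prod_planeWeight_le (n := k * m + 1) (by simp) S
  rw [Fintype.card_fin] at le_sum sum_le
  refine le_trans ?_ (sq_sum_planeWeight_le (by omega) fun X hX Y hY => isom_of_mem_grafts hS hX hY)
  have count_pow_nonneg : 0 ≤ planeTreeCount m ^ k := pow_nonneg (planeTreeCount_nonneg m) k
  refine pow_le_pow_left₀ (by positivity) ?_ 2
  calc planeTreeCount m ^ k / ((k : ℝ) + 1) ^ Fintype.card (RTree m)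
      = (∑ T : RTree m, planeWeight T) ^ k / ((k : ℝ) + 1) ^ Fintype.card (RTree m) / m ! ^ k := by
        rw [planeTreeCount, div_pow, div_right_comm]
    _ ≤ (∑ T ∈ S, ∏ i, planeWeight (T i)) / m ! ^ k := by gcongr
    _ ≤ (∑ X ∈ grafts (k * m + 1) S, planeWeight X) / (k * m + 1)! := by
        rw [div_le_div_iff₀ (by positivity) (by positivity)]
        linarith

end ProbIsomPlane

/-- The probability that two uniformly random plane trees of
size `n` are isomorphic decays subexponentially: for every `c ∈ (0,1)` there
are infinitely many `n` with `q_n > c^n`. -/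
theorem prob_isom_plane_subexponential_decay :
    Filter.limsup (fun n : ℕ => probIsomPlane n ^ ((n : ℝ)⁻¹)) Filter.atTop = 1 ∧
      ∀ c : ℝ, 0 < c → c < 1 → {n : ℕ | c ^ n < probIsomPlane n}.Infinite := by
  have infinite_pow_lt (c : ℝ) (hc0 : 0 < c) (hc1 : c < 1) :
      {n : ℕ | c ^ n < probIsomPlane n}.Infinite :=
    infinite_setOf_pow_lt_of_sq_le_mul_sq planeTreeCount_nonneg (planeTreeCount_pos one_ne_zero)
      planeTreeCount_le_pow
      (fun m => ⟨Fintype.card (RTree m), sq_planeTreeCount_pow_div_le m⟩) hc0 hc1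
  exact ⟨limsup_rpow_inv_eq_one probIsomPlane_nonneg probIsomPlane_le_one infinite_pow_lt,
    infinite_pow_lt⟩
end
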